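/- Let n ≥ 1 be an integer, θ ∈ (0, π/2), 1 ≤ k ≤ n, and let φ : C_θ → (0,∞) be smooth. For every integer m ≥ 1 there exists a constant C_m > 0 (depending only on m, n, k, θ and φ) such that: every smooth capillary function s on C_θ with τ[s] > 0 satisfying ∫_{C_θ} s(ζ) ζ_i dσ(ζ) = 0 for all i = 1,…,n and σ_k(τ[s])(ζ) = φ(ζ) for all ζ ∈ C_θ has C^m norm bounded by C_m; precisely, its 1-homogeneous extension G satisfies ‖D^jG(u)‖ ≤ C_m for every u ∈ S^n_θ and every 0 ≤ j ≤ m, where D^jG denotes the j-th total (Fréchet) derivative. -/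

import Mathlib

open MeasureTheory Real Set
open scoped RealInnerProductSpace

noncomputable section

abbrev V (n : ℕ) := EuclideanSpace ℝ (Fin (n + 1))

/-- The vertical unit vector `E_{n+1}`. -/
def Etop (n : ℕ) : V n := EuclideanSpace.single (Fin.last n) 1

/-- The spherical cap `S^n_θ`. -/
def sphCap (n : ℕ) (θ : ℝ) : Set (V n) :=
  {u | ‖u‖ = 1 ∧ Real.cos θ ≤ u (Fin.last n)}

/-- The boundary circle `∂S^n_θ`. -/
def sphCapBdry (n : ℕ) (θ : ℝ) : Set (V n) :=
  {u | ‖u‖ = 1 ∧ u (Fin.last n) = Real.cos θ}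

/-- The capillary cap `C_θ`. -/
def capCap (n : ℕ) (θ : ℝ) : Set (V n) :=
  {ζ | 0 ≤ ζ (Fin.last n) ∧ ‖ζ + Real.cos θ • Etop n‖ = 1}

/-- The open cone over `S^n_θ`. -/
def coneCap (n : ℕ) (θ : ℝ) : Set (V n) :=
  {x | ∃ l : ℝ, 0 < l ∧ ∃ u ∈ sphCap n θ, x = l • u}

/-- `G` is a positively 1-homogeneous extension of `g : C_θ → ℝ` which is `C^m` on an
open neighborhood of the cone over `S^n_θ`. -/
def IsHomExt (n : ℕ) (θ : ℝ) (m : ℕ∞) (g G : V n → ℝ) : Prop :=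
  (∃ U : Set (V n), IsOpen U ∧ coneCap n θ ⊆ U ∧ ContDiffOn ℝ m G U) ∧
  (∀ l : ℝ, 0 < l → ∀ u ∈ sphCap n θ, G (l • u) = l * G u) ∧
  (∀ ζ ∈ capCap n θ, G (ζ + Real.cos θ • Etop n) = g ζ)

/-- The Hessian of `G` at `u` as a quadratic/bilinear form. -/
def hessQ (n : ℕ) (G : V n → ℝ) (u v w : V n) : ℝ :=
  fderiv ℝ (fderiv ℝ G) u v w

/-- The Hessian matrix `D²G(u)` in the standard coordinates. -/
def hessM (n : ℕ) (G : V n → ℝ) (u : V n) : Matrix (Fin (n + 1)) (Fin (n + 1)) ℝ :=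
  fun i j => fderiv ℝ (fderiv ℝ G) u (EuclideanSpace.single i 1) (EuclideanSpace.single j 1)

/-- `σ_j` of the eigenvalues of `D²G(u)` (via characteristic polynomial coefficients). -/
def sigmaElem (n : ℕ) (j : ℕ) (G : V n → ℝ) (u : V n) : ℝ :=
  (-1 : ℝ) ^ j * ((hessM n G u).charpoly.coeff (n + 1 - j))

/-- `τ[g] ≥ 0` : the Hessian of the extension is positive semidefinite on `S^n_θ`. -/
def TauNonneg (n : ℕ) (θ : ℝ) (G : V n → ℝ) : Prop :=
  ∀ u ∈ sphCap n θ, ∀ v : V n, 0 ≤ hessQ n G u v v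

/-- `τ[g] > 0`. -/
def TauPos (n : ℕ) (θ : ℝ) (G : V n → ℝ) : Prop :=
  TauNonneg n θ G ∧
  ∀ u ∈ sphCap n θ, ∀ v : V n, v ≠ 0 → ⟪v, u⟫ = 0 → 0 < hessQ n G u v v

/-- Capillary (Robin) boundary condition: `∂_{n+1}G = 0` on `∂S^n_θ`. -/
def IsCapillaryF (n : ℕ) (θ : ℝ) (G : V n → ℝ) : Prop :=
  ∀ u ∈ sphCapBdry n θ, fderiv ℝ G u (Etop n) = 0

/-- Reflection negating the horizontal coordinates. -/
def horizNeg (n : ℕ) (ζ : V n) : V n := (2 * ζ (Fin.last n)) • Etop n - ζ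

/-- Support function of a set. -/
def suppFn (n : ℕ) (K : Set (V n)) (u : V n) : ℝ := sSup ((fun y => ⟪u, y⟫) '' K)

/-- Relative interior (within the hyperplane `{x_{n+1}=0}`) of the base `K ∩ {x_{n+1}=0}`. -/
def relintBase (n : ℕ) (K : Set (V n)) : Set (V n) :=
  {x | x (Fin.last n) = 0 ∧ ∃ ε > 0, ∀ y : V n, y (Fin.last n) = 0 → ‖y - x‖ < ε → y ∈ K}

/-- A `θ`-capillary convex body. -/
def IsCapBody (n : ℕ) (θ : ℝ) (K : Set (V n)) : Prop :=
  IsCompact K ∧ Convex ℝ K ∧ (interior K).Nonempty ∧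
  (∀ x ∈ K, 0 ≤ x (Fin.last n)) ∧
  (∀ x ∈ K, 0 < x (Fin.last n) → ∀ u : V n, ‖u‖ = 1 → ⟪u, x⟫ = suppFn n K u →
    Real.cos θ ≤ u (Fin.last n)) ∧
  (∀ v : V n, ‖v‖ = 1 → v (Fin.last n) = 0 →
    suppFn n K (Real.sin θ • v + Real.cos θ • Etop n) = Real.sin θ * suppFn n K v) ∧
  (relintBase n K).Nonempty

/-- `ψ` is one of `x²`, `x^p (p<0)`, `-log x`. -/
def PsiOK (ψ : ℝ → ℝ) : Prop :=
  (ψ = fun x : ℝ => x ^ 2) ∨ (∃ p : ℝ, p < 0 ∧ ψ = fun x : ℝ => x ^ p) ∨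
    (ψ = fun x : ℝ => -Real.log x)

/-!
The estimate follows from uniqueness: the constant is a bound for the derivatives of the only
solution.

For two solutions `f` and `g`, made positive by subtracting horizontal linear functions, consider
the vector field `T_k(D²g)(g∇f - f∇g) + T_k(D²f)(f∇g - g∇f)`, where `T_k` is the Newton
transformation of degree `k`, so that `T_k(D²f) D²f` has trace `(k + 1) σ_{k+1}(D²f)`. The capillary
condition makes the field tangent to the boundary of the cone over the cap, and Newton
transformations of Hessians are divergence free, so its divergence integrates to zero. If
`σ_{k+1}(D²f) = σ_{k+1}(D²g)` with `k ≥ 1`, strict concavity of `log σ_{k+1}` on positive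
semidefinite matrices with `σ_{k+1} > 0` makes the divergence nonnegative, with equality only where
the Hessians agree.
For `σ_1` the same argument applies to the difference `f` of the solutions and the positive function
`g = ‖x‖ - cos θ x_{n+1}`: since `Δf = 0`, the divergence of `T_1(D²f)(f∇g - g∇f)` is `g |D²f|²`.

Hence two solutions differ by a linear function, horizontal by the capillary condition, and this
vanishes by the moment condition.
-/

section ElementarySymmetric
variable {ι R : Type*}

/-- The elementary symmetric polynomial of degree `k` in the variables `x i`, `i ∈ S`. -/
def elemSym [CommSemiring R] (S : Finset ι) (x : ι → R) (k : ℕ) : R :=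
  ∑ t ∈ S.powersetCard k, ∏ i ∈ t, x i

section CommSemiring
variable [CommSemiring R]

lemma elemSym_zero (S : Finset ι) (x : ι → R) : elemSym S x 0 = 1 := by
  simp [elemSym]

lemma elemSym_empty_succ (x : ι → R) (k : ℕ) : elemSym ∅ x (k + 1) = 0 := by
  rw [elemSym, Finset.powersetCard_eq_empty.2 (by simp), Finset.sum_empty]

lemma elemSym_insert_succ [DecidableEq ι] {S : Finset ι} {i : ι} (hi : i ∉ S) (x : ι → R)
    (k : ℕ) :
    elemSym (insert i S) x (k + 1) = elemSym S x (k + 1) + x i * elemSym S x k := by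
  have mem_of {t : Finset ι} (ht : t ∈ S.powersetCard k) : i ∉ t :=
    fun hit => hi ((Finset.mem_powersetCard.1 ht).1 hit)
  have disjoint : Disjoint (S.powersetCard (k + 1)) ((S.powersetCard k).image (insert i)) := by
    refine Finset.disjoint_left.2 fun t ht ht' => ?_
    obtain ⟨r, -, rfl⟩ := Finset.mem_image.1 ht'
    exact hi ((Finset.mem_powersetCard.1 ht).1 (Finset.mem_insert_self i r))
  have injOn : Set.InjOn (insert i) (S.powersetCard k : Set (Finset ι)) := fun t ht r hr h => by
    rw [← Finset.erase_insert (mem_of ht), h, Finset.erase_insert (mem_of hr)]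
  rw [elemSym, Finset.powersetCard_succ_insert hi, Finset.sum_union disjoint,
    Finset.sum_image injOn, elemSym, elemSym, Finset.mul_sum]
  exact congrArg _ (Finset.sum_congr rfl fun t ht => Finset.prod_insert (mem_of ht))

lemma elemSym_eq_erase_add [DecidableEq ι] {S : Finset ι} {i : ι} (hi : i ∈ S) (x : ι → R)
    (k : ℕ) :
    elemSym S x (k + 1) = elemSym (S.erase i) x (k + 1) + x i * elemSym (S.erase i) x k := by
  conv_lhs => rw [← Finset.insert_erase hi]
  exact elemSym_insert_succ (Finset.notMem_erase i S) x k

lemma elemSym_one (S : Finset ι) (x : ι → R) : elemSym S x 1 = ∑ i ∈ S, x i := by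
  simp [elemSym, Finset.powersetCard_one]

lemma elemSym_smul (S : Finset ι) (a : R) (x : ι → R) (k : ℕ) :
    elemSym S (a • x) k = a ^ k * elemSym S x k := by
  rw [elemSym, elemSym, Finset.mul_sum]
  refine Finset.sum_congr rfl fun t ht => ?_
  simp [Finset.prod_mul_distrib, (Finset.mem_powersetCard.1 ht).2]

open Polynomial in
lemma coeff_prod_one_add_C_mul_X (S : Finset ι) (x : ι → R) (k : ℕ) :
    (∏ i ∈ S, (1 + C (x i) * X)).coeff k = elemSym S x k := by
  classical
  induction S using Finset.induction_on generalizing k with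
  | empty => cases k <;> simp [elemSym_zero, elemSym_empty_succ, coeff_one]
  | insert i S hi ih =>
    cases k with
    | zero => simp [elemSym_zero, coeff_zero_prod]
    | succ k =>
      simp only [Finset.prod_insert hi, elemSym_insert_succ hi, add_mul, one_mul, coeff_add,
        mul_assoc, coeff_C_mul, coeff_X_mul, ih]

lemma elemSym_univ_comp_perm [Fintype ι] (x : ι → R) (ρ : Equiv.Perm ι) (k : ℕ) :
    elemSym Finset.univ (x ∘ ρ) k = elemSym Finset.univ x k := by
  rw [← coeff_prod_one_add_C_mul_X, ← coeff_prod_one_add_C_mul_X]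
  congr 1
  exact Equiv.prod_comp ρ fun i => 1 + Polynomial.C (x i) * Polynomial.X

/-- Differentiate `∏ i, (1 + x i * X)` and compare coefficients. -/
lemma succ_mul_elemSym_succ [DecidableEq ι] (S : Finset ι) (x : ι → R) (k : ℕ) :
    (k + 1) * elemSym S x (k + 1) = ∑ i ∈ S, x i * elemSym (S.erase i) x k := by
  have h := congrArg (Polynomial.coeff · k) (Polynomial.derivative_prod_finset (s := S)
    (f := fun i => (1 + Polynomial.C (x i) * Polynomial.X)))
  simp only [Polynomial.coeff_derivative, Polynomial.finsetSum_coeff, Polynomial.derivative_add,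
    Polynomial.derivative_one, Polynomial.derivative_C_mul, Polynomial.derivative_X, zero_add,
    mul_one, Polynomial.coeff_mul_C, coeff_prod_one_add_C_mul_X] at h
  simpa only [mul_comm] using h

end CommSemiring

lemma two_mul_elemSym_two [CommRing R] (S : Finset ι) (x : ι → R) :
    2 * elemSym S x 2 = (∑ i ∈ S, x i) ^ 2 - ∑ i ∈ S, x i ^ 2 := by
  classical
  have newton := succ_mul_elemSym_succ S x 1
  rw [Nat.cast_one, one_add_one_eq_two] at newton
  rw [newton, sq, Finset.sum_mul, ← Finset.sum_sub_distrib]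
  refine Finset.sum_congr rfl fun i hi => ?_
  rw [elemSym_one, ← Finset.add_sum_erase S x hi]
  ring

/-- The quotient of consecutive elementary symmetric polynomials, which is `0` where the
denominator vanishes. -/
def elemQuot [Semifield R] (S : Finset ι) (x : ι → R) (k : ℕ) : R :=
  elemSym S x (k + 1) / elemSym S x k

lemma elemQuot_zero [Semifield R] (S : Finset ι) (x : ι → R) :
    elemQuot S x 0 = ∑ i ∈ S, x i := by
  simp [elemQuot, elemSym_zero, elemSym_one]

lemma elemQuot_smul [Semifield R] (S : Finset ι) (a : R) (x : ι → R) (k : ℕ) :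
    elemQuot S (a • x) k = a * elemQuot S x k := by
  rw [elemQuot, elemQuot, elemSym_smul, elemSym_smul]
  rcases eq_or_ne a 0 with rfl | ha
  · simp
  · rw [pow_succ, mul_assoc, mul_div_mul_left _ _ (pow_ne_zero k ha), mul_div_assoc]

section Ordered
variable [Field R] [LinearOrder R] [IsStrictOrderedRing R] (S : Finset ι) {x y : ι → R}

lemma elemSym_nonneg (hx : 0 ≤ x) (k : ℕ) : 0 ≤ elemSym S x k :=
  Finset.sum_nonneg fun _ _ => Finset.prod_nonneg fun i _ => hx i

lemma elemSym_succ_eq_zero (hx : 0 ≤ x) {k : ℕ} (h : elemSym S x k = 0) :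
    elemSym S x (k + 1) = 0 := by
  classical
  induction S using Finset.induction_on generalizing k with
  | empty => exact elemSym_empty_succ x k
  | insert i S hi ih =>
    cases k with
    | zero => simp [elemSym_zero] at h
    | succ k =>
      rw [elemSym_insert_succ hi] at h ⊢
      have hS : elemSym S x (k + 1) = 0 := ((add_eq_zero_iff_of_nonneg (elemSym_nonneg S hx _)
        (mul_nonneg (hx i) (elemSym_nonneg S hx k))).1 h).1
      rw [ih hS, hS, mul_zero, add_zero]

lemma elemQuot_nonneg (hx : 0 ≤ x) (k : ℕ) : 0 ≤ elemQuot S x k :=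
  div_nonneg (elemSym_nonneg S hx _) (elemSym_nonneg S hx _)

lemma elemSym_eq_prod_elemQuot (hx : 0 ≤ x) (k : ℕ) :
    elemSym S x k = ∏ j ∈ Finset.range k, elemQuot S x j := by
  induction k with
  | zero => simp [elemSym_zero]
  | succ k ih =>
    rw [Finset.prod_range_succ, ← ih, elemQuot, mul_div_cancel_of_imp']
    exact elemSym_succ_eq_zero S hx

variable {S} in
lemma elemQuot_pos (hx : 0 ≤ x) {k : ℕ} (h : 0 < elemSym S x k) {j : ℕ} (hj : j < k) :
    0 < elemQuot S x j := by
  rw [elemSym_eq_prod_elemQuot S hx] at h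
  exact (elemQuot_nonneg S hx j).lt_of_ne'
    (Finset.prod_ne_zero_iff.1 h.ne' j (Finset.mem_range.2 hj))

variable {S} in
lemma elemSym_succ_div_elemSym_succ [DecidableEq ι] (hx : 0 ≤ x) {i : ι} (hi : i ∈ S) (k : ℕ) :
    elemSym (S.erase i) x (k + 1) / elemSym S x (k + 1) =
      elemQuot (S.erase i) x k / (x i + elemQuot (S.erase i) x k) := by
  rw [elemSym_eq_erase_add hi x k, elemQuot]
  rcases eq_or_ne (elemSym (S.erase i) x k) 0 with h | h
  · simp [elemSym_succ_eq_zero _ hx h]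
  · rw [← mul_div_mul_right _ (x i + _) h, div_mul_cancel₀ _ h, add_mul, div_mul_cancel₀ _ h,
      add_comm (x i * _)]

lemma add_two_mul_elemQuot_succ [DecidableEq ι] (hx : 0 ≤ x) (k : ℕ) :
    (k + 2) * elemQuot S x (k + 1) =
      ∑ i ∈ S, x i * elemQuot (S.erase i) x k / (x i + elemQuot (S.erase i) x k) := by
  have newton := succ_mul_elemSym_succ S x (k + 1)
  push_cast at newton
  rw [elemQuot, ← mul_div_assoc, show (k : R) + 2 = k + 1 + 1 by ring, newton, Finset.sum_div]
  refine Finset.sum_congr rfl fun i hi => ?_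
  rw [mul_div_assoc, mul_div_assoc, elemSym_succ_div_elemSym_succ hx hi]

lemma mul_div_add_mono {a b c : R} (ha : 0 ≤ a) (hb : 0 ≤ b) (hbc : b ≤ c) :
    a * b / (a + b) ≤ a * c / (a + c) := by
  rcases (add_nonneg ha hb).eq_or_lt with h | h
  · rw [← h, div_zero]
    exact div_nonneg (mul_nonneg ha (hb.trans hbc)) (add_nonneg ha (hb.trans hbc))
  · rw [div_le_div_iff₀ h (by linarith)]
    nlinarith [mul_nonneg (mul_nonneg ha ha) (sub_nonneg.2 hbc)]

lemma mul_div_add_add_le {a b c d : R} (ha : 0 ≤ a) (hb : 0 ≤ b) (hc : 0 ≤ c) (hd : 0 ≤ d) :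
    a * b / (a + b) + c * d / (c + d) ≤ (a + c) * (b + d) / (a + c + (b + d)) := by
  rcases (add_nonneg ha hb).eq_or_lt with h | hab
  · obtain ⟨rfl, rfl⟩ := (add_eq_zero_iff_of_nonneg ha hb).1 h.symm
    simp
  rcases (add_nonneg hc hd).eq_or_lt with h | hcd
  · obtain ⟨rfl, rfl⟩ := (add_eq_zero_iff_of_nonneg hc hd).1 h.symm
    simp
  rw [div_add_div _ _ hab.ne' hcd.ne', div_le_div_iff₀ (mul_pos hab hcd) (by linarith)]
  nlinarith [sq_nonneg (a * d - b * c)]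

/-- The **Marcus–Lopes inequality**. -/
lemma elemQuot_add_le (hx : 0 ≤ x) (hy : 0 ≤ y) (k : ℕ) :
    elemQuot S x k + elemQuot S y k ≤ elemQuot S (x + y) k := by
  classical
  induction k generalizing S with
  | zero => simp [elemQuot_zero, Finset.sum_add_distrib]
  | succ k ih =>
    refine le_of_mul_le_mul_left ?_ (show (0 : R) < k + 2 by positivity)
    rw [mul_add, add_two_mul_elemQuot_succ S hx, add_two_mul_elemQuot_succ S hy,
      add_two_mul_elemQuot_succ S (add_nonneg hx hy), ← Finset.sum_add_distrib]
    refine Finset.sum_le_sum fun i _ => ?_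
    have hqx := elemQuot_nonneg (S.erase i) hx k
    have hqy := elemQuot_nonneg (S.erase i) hy k
    exact (mul_div_add_add_le (hx i) hqx (hy i) hqy).trans
      (mul_div_add_mono (add_nonneg (hx i) (hy i)) (add_nonneg hqx hqy) (ih _))

lemma concaveOn_elemQuot (k : ℕ) : ConcaveOn R (Set.Ici 0) fun x : ι → R => elemQuot S x k := by
  refine ⟨convex_Ici 0, fun x hx y hy a b ha hb _ => ?_⟩
  rw [smul_eq_mul, smul_eq_mul, ← elemQuot_smul, ← elemQuot_smul]
  exact elemQuot_add_le S (smul_nonneg ha hx) (smul_nonneg hb hy) k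

lemma convex_setOf_elemSym_pos (k : ℕ) : Convex R {x : ι → R | 0 ≤ x ∧ 0 < elemSym S x k} := by
  rintro x ⟨hx, hxk⟩ y ⟨hy, hyk⟩ a b ha hb hab
  have hz : 0 ≤ a • x + b • y := add_nonneg (smul_nonneg ha hx) (smul_nonneg hb hy)
  refine ⟨hz, ?_⟩
  rw [elemSym_eq_prod_elemQuot S hz]
  refine Finset.prod_pos fun j hj => ?_
  have hj := Finset.mem_range.1 hj
  exact ((concaveOn_elemQuot S j).convex_gt (0 : R) (x := x) (y := y)
    ⟨hx, elemQuot_pos hx hxk hj⟩ ⟨hy, elemQuot_pos hy hyk hj⟩ ha hb hab).2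

end Ordered

lemma log_elemSym (S : Finset ι) {x : ι → ℝ} (hx : 0 ≤ x) {k : ℕ} (h : 0 < elemSym S x k) :
    log (elemSym S x k) = ∑ j ∈ Finset.range k, log (elemQuot S x j) := by
  rw [elemSym_eq_prod_elemQuot S hx,
    log_prod fun j hj => (elemQuot_pos hx h (Finset.mem_range.1 hj)).ne']

lemma concaveOn_log_comp {E : Type*} [AddCommMonoid E] [Module ℝ E] {s : Set E} {f : E → ℝ}
    (hf : ConcaveOn ℝ s f) (hpos : ∀ x ∈ s, 0 < f x) : ConcaveOn ℝ s fun x => log (f x) := by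
  refine ⟨hf.1, fun x hx y hy a b ha hb hab => ?_⟩
  have hxy := strictConcaveOn_log_Ioi.concaveOn.1 (hpos x hx) (hpos y hy) ha hb hab
  exact (strictConcaveOn_log_Ioi.concaveOn.2 (hpos x hx) (hpos y hy) ha hb hab).trans
    (log_le_log hxy (hf.2 hx hy ha hb hab))

/-- On a hyperplane `∑ i, x i = const` the quotient is a constant minus a multiple of
`∑ i, x i ^ 2`. -/
lemma elemQuot_one_combo_lt [Fintype ι] {x y : ι → ℝ} (hne : x ≠ y)
    (hxy : ∑ i, x i = ∑ i, y i) (hpos : 0 < ∑ i, x i) {a b : ℝ} (ha : 0 < a) (hb : 0 < b)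
    (hab : a + b = 1) :
    a * elemQuot Finset.univ x 1 + b * elemQuot Finset.univ y 1 <
      elemQuot Finset.univ (a • x + b • y) 1 := by
  have sum_combo : ∑ i, (a • x + b • y) i = ∑ i, x i := by
    simp only [Pi.add_apply, Pi.smul_apply, smul_eq_mul, Finset.sum_add_distrib,
      ← Finset.mul_sum, ← hxy, ← add_mul, hab, one_mul]
  have sum_sq_combo_lt :
      ∑ i, (a • x + b • y) i ^ 2 < a * ∑ i, x i ^ 2 + b * ∑ i, y i ^ 2 := by
    have hsq := (even_two.strictConvexOn_pow two_ne_zero : StrictConvexOn ℝ univ fun t : ℝ => t ^ 2)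
    obtain ⟨i, hi⟩ := Function.ne_iff.1 hne
    rw [Finset.mul_sum, Finset.mul_sum, ← Finset.sum_add_distrib]
    exact Finset.sum_lt_sum
      (fun j _ => hsq.convexOn.2 (mem_univ (x j)) (mem_univ (y j)) ha.le hb.le hab)
      ⟨i, Finset.mem_univ i, hsq.2 (mem_univ (x i)) (mem_univ (y i)) hi ha hb hab⟩
  have elemQuot_one (z : ι → ℝ) :
      elemQuot Finset.univ z 1 = ((∑ i, z i) ^ 2 - ∑ i, z i ^ 2) / 2 / ∑ i, z i := by
    rw [← two_mul_elemSym_two, elemQuot, elemSym_one, mul_div_cancel_left₀ _ two_ne_zero]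
  rw [elemQuot_one, elemQuot_one, elemQuot_one, sum_combo, ← hxy, ← mul_div_assoc a,
    ← mul_div_assoc b, ← add_div]
  refine div_lt_div_of_pos_right ?_ hpos
  linear_combination sum_sq_combo_lt / 2 + (∑ i, x i) ^ 2 / 2 * hab

section
variable [Fintype ι]

lemma concaveOn_log_elemQuot {j k : ℕ} (hjk : j < k) :
    ConcaveOn ℝ {x : ι → ℝ | 0 ≤ x ∧ 0 < elemSym Finset.univ x k}
      fun x => log (elemQuot Finset.univ x j) :=
  concaveOn_log_comp
    ((concaveOn_elemQuot Finset.univ j).subset (fun _ hx => hx.1) (convex_setOf_elemSym_pos _ k))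
    fun _ hx => elemQuot_pos hx.1 hx.2 hjk

lemma strictConcaveOn_log_elemQuot_zero_add_one {k : ℕ} (hk : 2 ≤ k) :
    StrictConcaveOn ℝ {x : ι → ℝ | 0 ≤ x ∧ 0 < elemSym Finset.univ x k}
      fun x => log (elemQuot Finset.univ x 0) + log (elemQuot Finset.univ x 1) := by
  refine ⟨convex_setOf_elemSym_pos _ k, fun x hx y hy hne a b ha hb hab => ?_⟩
  have concave₀ := (concaveOn_log_elemQuot (by omega : 0 < k)).2 hx hy ha.le hb.le hab
  have concave₁ := (concaveOn_log_elemQuot (by omega : 1 < k)).2 hx hy ha.le hb.le hab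
  have hx₀ := elemQuot_pos hx.1 hx.2 (by omega : 0 < k)
  have hy₀ := elemQuot_pos hy.1 hy.2 (by omega : 0 < k)
  have hx₁ := elemQuot_pos hx.1 hx.2 (by omega : 1 < k)
  have hy₁ := elemQuot_pos hy.1 hy.2 (by omega : 1 < k)
  simp only [smul_eq_mul] at concave₀ concave₁ ⊢
  suffices a * log (elemQuot Finset.univ x 0) + b * log (elemQuot Finset.univ y 0) <
        log (elemQuot Finset.univ (a • x + b • y) 0) ∨
      a * log (elemQuot Finset.univ x 1) + b * log (elemQuot Finset.univ y 1) <
        log (elemQuot Finset.univ (a • x + b • y) 1) by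
    rcases this with h | h <;> linarith
  by_cases hsum : elemQuot Finset.univ x 0 = elemQuot Finset.univ y 0
  · right
    refine (strictConcaveOn_log_Ioi.concaveOn.2 hx₁ hy₁ ha.le hb.le hab).trans_lt ?_
    refine log_lt_log (add_pos (mul_pos ha hx₁) (mul_pos hb hy₁)) ?_
    rw [elemQuot_zero, elemQuot_zero] at hsum
    exact elemQuot_one_combo_lt hne hsum (elemQuot_zero Finset.univ x ▸ hx₀) ha hb hab
  · left
    refine (strictConcaveOn_log_Ioi.2 hx₀ hy₀ hsum ha hb hab).trans_le ?_
    exact log_le_log (add_pos (mul_pos ha hx₀) (mul_pos hb hy₀))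
      ((concaveOn_elemQuot Finset.univ 0).2 hx.1 hy.1 ha.le hb.le hab)

theorem strictConcaveOn_log_elemSym {k : ℕ} (hk : 2 ≤ k) :
    StrictConcaveOn ℝ {x : ι → ℝ | 0 ≤ x ∧ 0 < elemSym Finset.univ x k}
      fun x => log (elemSym Finset.univ x k) := by
  have concave_rest : ConcaveOn ℝ {x : ι → ℝ | 0 ≤ x ∧ 0 < elemSym Finset.univ x k}
      (fun x => ∑ j ∈ Finset.Ico 2 k, log (elemQuot Finset.univ x j)) := by
    refine ⟨convex_setOf_elemSym_pos _ k, fun x hx y hy a b ha hb hab => ?_⟩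
    simp only [Finset.smul_sum, ← Finset.sum_add_distrib]
    exact Finset.sum_le_sum fun j hj =>
      (concaveOn_log_elemQuot (Finset.mem_Ico.1 hj).2).2 hx hy ha hb hab
  refine ((strictConcaveOn_log_elemQuot_zero_add_one hk).add_concaveOn concave_rest).congr
    fun x hx => ?_
  rw [Pi.add_apply, log_elemSym Finset.univ hx.1 hx.2, Finset.range_eq_Ico,
    ← Finset.sum_Ico_consecutive _ (Nat.zero_le 2) hk]
  simp [Finset.sum_range_succ]

end

end ElementarySymmetric

section NewtonTransformation
open Polynomial
variable {ι R : Type*} [DecidableEq ι] [CommRing R]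

/-- The matrix polynomial `1 + X M`, whose determinant and adjugate generate the elementary
symmetric functions and the Newton transformations of `M`. -/
def oneAddX (M : Matrix ι ι R) : Matrix ι ι R[X] := 1 + (X : R[X]) • M.map C

lemma map_eval_oneAddX (M : Matrix ι ι R) (t : R) : (oneAddX M).map (eval t) = 1 + t • M := by
  ext i j
  rcases eq_or_ne i j with rfl | h
  · simp [oneAddX, mul_comm (M i i) t]
  · simp [oneAddX, h, mul_comm (M i j) t]

variable [Fintype ι]

/-- The `k`-th elementary symmetric function of the eigenvalues of a matrix, as the coefficient
of `X ^ k` in `det (1 + X M)`. -/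
def matSym (M : Matrix ι ι R) (k : ℕ) : R := (oneAddX M).det.coeff k

/-- The `k`-th Newton transformation of a matrix, as the coefficient of `X ^ k` in the adjugate
of `1 + X M`. -/
def newtonT (M : Matrix ι ι R) (k : ℕ) : Matrix ι ι R :=
  Matrix.of fun i j => ((oneAddX M).adjugate i j).coeff k

lemma eval_det_oneAddX (M : Matrix ι ι R) (t : R) :
    (oneAddX M).det.eval t = (1 + t • M).det := by
  rw [← map_eval_oneAddX]
  exact RingHom.map_det (evalRingHom t) (oneAddX M)

lemma map_eval_adjugate_oneAddX (M : Matrix ι ι R) (t : R) :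
    (oneAddX M).adjugate.map (eval t) = (1 + t • M).adjugate := by
  rw [← map_eval_oneAddX]
  exact RingHom.map_adjugate (evalRingHom t) (oneAddX M)

lemma natDegree_det_oneAddX_le (M : Matrix ι ι R) :
    (oneAddX M).det.natDegree ≤ Fintype.card ι := by
  have := natDegree_det_X_add_C_le M (1 : Matrix ι ι R)
  rwa [Matrix.map_one _ (map_zero _) (map_one _), add_comm] at this

lemma matSym_eq_sum_minors (M : Matrix ι ι R) (k : ℕ) :
    matSym M k = ∑ s ∈ Finset.univ.powersetCard k,
      (M.submatrix (Subtype.val : s → ι) Subtype.val).det :=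
  Matrix.coeff_det_one_add_X_smul_eq_sum_minors M k

lemma matSym_zero (M : Matrix ι ι R) : matSym M 0 = 1 := by
  rw [matSym, coeff_zero_eq_eval_zero, eval_det_oneAddX, zero_smul, add_zero, Matrix.det_one]

lemma matSym_one (M : Matrix ι ι R) : matSym M 1 = M.trace :=
  Matrix.coeff_det_one_add_X_smul_one M

lemma matSym_smul (c : R) (M : Matrix ι ι R) (k : ℕ) :
    matSym (c • M) k = c ^ k * matSym M k := by
  simp only [matSym_eq_sum_minors, Finset.mul_sum]
  refine Finset.sum_congr rfl fun s hs => ?_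
  rw [Matrix.submatrix_smul, Pi.smul_apply, Pi.smul_apply, Matrix.det_smul, Fintype.card_coe,
    (Finset.mem_powersetCard.1 hs).2]

lemma matSym_eq_charpoly_coeff [Nontrivial R] (M : Matrix ι ι R) {k : ℕ}
    (hk : k ≤ Fintype.card ι) :
    matSym M k = (-1) ^ k * M.charpoly.coeff (Fintype.card ι - k) := by
  have hrev : matSym (-M) k = M.charpolyRev.coeff k := by
    have hneg : (-M).map C = -M.map C := by ext; simp
    rw [matSym, oneAddX, Matrix.charpolyRev, hneg, smul_neg, sub_eq_add_neg]
  calc matSym M k = (-1) ^ k * matSym (-M) k := by rw [← matSym_smul, neg_one_smul, neg_neg]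
    _ = _ := by rw [hrev, ← Matrix.reverse_charpoly, coeff_reverse,
      Matrix.charpoly_natDegree_eq_dim, revAt_le hk]

lemma matSym_diagonal (d : ι → R) (k : ℕ) :
    matSym (Matrix.diagonal d) k = elemSym Finset.univ d k := by
  have : oneAddX (Matrix.diagonal d) = Matrix.diagonal fun i => 1 + C (d i) * X := by
    ext i j
    rcases eq_or_ne i j with rfl | h
    · simp [oneAddX]
    · simp [oneAddX, h]
  rw [matSym, this, Matrix.det_diagonal, coeff_prod_one_add_C_mul_X]

lemma matSym_conj {P Q : Matrix ι ι R} (h : P * Q = 1) (M : Matrix ι ι R) (k : ℕ) :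
    matSym (P * M * Q) k = matSym M k := by
  have hPQ : P.map C * Q.map C = (1 : Matrix ι ι R[X]) := by
    rw [← Matrix.map_mul, h, Matrix.map_one _ C.map_zero C.map_one]
  have : oneAddX (P * M * Q) = P.map C * oneAddX M * Q.map C := by
    rw [oneAddX, oneAddX, Matrix.mul_add, Matrix.add_mul, mul_one, hPQ, Matrix.mul_smul,
      Matrix.smul_mul, Matrix.map_mul, Matrix.map_mul]
  rw [matSym, this, Matrix.det_mul_right_comm, hPQ, one_mul, matSym]

lemma newtonT_zero (M : Matrix ι ι R) : newtonT M 0 = 1 := by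
  rw [← Matrix.adjugate_one, ← add_zero (1 : Matrix ι ι R), ← zero_smul R M,
    ← map_eval_adjugate_oneAddX]
  ext i j
  simp [newtonT, coeff_zero_eq_eval_zero]

lemma newtonT_succ (M : Matrix ι ι R) (k : ℕ) :
    newtonT M (k + 1) = matSym M (k + 1) • (1 : Matrix ι ι R) - M * newtonT M k := by
  rw [eq_sub_iff_add_eq]
  ext i j
  have h := Matrix.mul_adjugate (oneAddX M)
  nth_rw 1 [oneAddX] at h
  rw [add_mul, one_mul, Matrix.smul_mul] at h
  have hcoeff := congrArg (fun A => (A i j).coeff (k + 1)) h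
  simp only [Matrix.add_apply, Matrix.smul_apply, smul_eq_mul, coeff_add, coeff_X_mul,
    Matrix.mul_apply, Matrix.map_apply, finsetSum_coeff, coeff_C_mul] at hcoeff
  simp only [Matrix.add_apply, Matrix.smul_apply, smul_eq_mul, Matrix.mul_apply,
    newtonT, Matrix.of_apply, hcoeff, matSym, Matrix.one_apply]
  split <;> simp

lemma commute_newtonT (M : Matrix ι ι R) (k : ℕ) : Commute M (newtonT M k) := by
  induction k with
  | zero => rw [newtonT_zero]; exact Commute.one_right M
  | succ k ih =>
    rw [newtonT_succ]
    exact ((Commute.one_right M).smul_right _).sub_right ((Commute.refl M).mul_right ih)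

lemma newtonT_isSymm {M : Matrix ι ι R} (hM : M.IsSymm) (k : ℕ) : (newtonT M k).IsSymm := by
  induction k with
  | zero => rw [newtonT_zero]; exact Matrix.isSymm_one
  | succ k ih =>
    rw [Matrix.IsSymm, newtonT_succ, Matrix.transpose_sub, Matrix.transpose_mul, ih, hM,
      (commute_newtonT M k).eq, Matrix.transpose_smul, Matrix.transpose_one]

lemma newtonT_mulVec_of_mulVec_eq_zero {M : Matrix ι ι R} {v : ι → R} (hv : M.mulVec v = 0)
    (k : ℕ) : (newtonT M k).mulVec v = matSym M k • v := by
  cases k with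
  | zero => rw [newtonT_zero, matSym_zero, Matrix.one_mulVec, one_smul]
  | succ k =>
    rw [newtonT_succ, (commute_newtonT M k).eq, Matrix.sub_mulVec, ← Matrix.mulVec_mulVec, hv,
      Matrix.mulVec_zero, sub_zero, Matrix.smul_mulVec, Matrix.one_mulVec]

lemma newtonT_mulVec_mem {M : Matrix ι ι R} {p : Submodule R (ι → R)}
    (hp : ∀ v ∈ p, M.mulVec v ∈ p) {v : ι → R} (hv : v ∈ p) (k : ℕ) :
    (newtonT M k).mulVec v ∈ p := by
  induction k with
  | zero => rwa [newtonT_zero, Matrix.one_mulVec]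
  | succ k ih =>
    rw [newtonT_succ, Matrix.sub_mulVec, ← Matrix.mulVec_mulVec, Matrix.smul_mulVec,
      Matrix.one_mulVec]
    exact p.sub_mem (p.smul_mem _ hv) (hp _ ih)

end NewtonTransformation

section Jacobi
variable {ι 𝕜 E : Type*} [Fintype ι] [DecidableEq ι] [NontriviallyNormedField 𝕜]
  [NormedAddCommGroup E] [NormedSpace 𝕜 E] {A : E → Matrix ι ι 𝕜} {A' : ι → ι → E →L[𝕜] 𝕜} {x : E}

lemma hasFDerivAt_det (hA : ∀ i j, HasFDerivAt (fun y => A y i j) (A' i j) x) :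
    HasFDerivAt (fun y => (A y).det) (∑ i, ∑ j, (A x).adjugate j i • A' i j) x := by
  let D : ContinuousMultilinearMap 𝕜 (fun _ : ι => ι → 𝕜) 𝕜 :=
    { toMultilinearMap := (Matrix.detRowAlternating (n := ι) (R := 𝕜)).toMultilinearMap
      cont := Continuous.matrix_det (A := fun m : ι → ι → 𝕜 => Matrix.of m) continuous_id }
  have hrows : HasFDerivAt (fun y i j => A y i j)
      (ContinuousLinearMap.pi fun i => ContinuousLinearMap.pi (A' i)) x :=
    hasFDerivAt_pi.2 fun i => hasFDerivAt_pi.2 (hA i)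
  refine ((D.hasFDerivAt (fun i j => A x i j)).comp x hrows).congr_fderiv ?_
  ext v
  rw [ContinuousLinearMap.comp_apply, ContinuousMultilinearMap.linearDeriv_apply,
    sum_apply]
  refine Finset.sum_congr rfl fun i _ => ?_
  change ((A x).updateRow i fun j => A' i j v).det = _
  rw [← Matrix.cramer_transpose_apply, Matrix.cramer_eq_adjugate_mulVec,
    ← Matrix.adjugate_transpose]
  simp [Matrix.mulVec, dotProduct]

lemma differentiableAt_matSym (hA : ∀ i j, DifferentiableAt 𝕜 (fun y => A y i j) x) (k : ℕ) :
    DifferentiableAt 𝕜 (fun y => matSym (A y) k) x := by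
  simp only [matSym_eq_sum_minors]
  exact DifferentiableAt.fun_sum fun s _ =>
    (hasFDerivAt_det (A := fun y => (A y).submatrix Subtype.val Subtype.val)
      fun i j : s => (hA i j).hasFDerivAt).differentiableAt

open Polynomial in
/-- Compare coefficients in Jacobi's formula for `det (1 + t A)`, a polynomial in `t`. -/
lemma hasFDerivAt_matSym (hA : ∀ i j, HasFDerivAt (fun y => A y i j) (A' i j) x) (k : ℕ) :
    HasFDerivAt (fun y => matSym (A y) (k + 1)) (∑ i, ∑ j, newtonT (A x) k j i • A' i j) x := by
  have hd (m : ℕ) : DifferentiableAt 𝕜 (fun y => matSym (A y) m) x :=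
    differentiableAt_matSym (fun i j => (hA i j).differentiableAt) m
  refine (hd (k + 1)).hasFDerivAt.congr_fderiv ?_
  ext v
  let p : 𝕜[X] := ∑ m ∈ Finset.range (Fintype.card ι + k + 2),
    C (fderiv 𝕜 (fun y => matSym (A y) m) x v) * X ^ m
  let q : 𝕜[X] := X * ∑ i, ∑ j, (oneAddX (A x)).adjugate j i * C (A' i j v)
  have hpq : p = q := by
    refine Polynomial.funext fun t => ?_
    have hdet (y : E) : (1 + t • A y).det =
        ∑ m ∈ Finset.range (Fintype.card ι + k + 2), matSym (A y) m * t ^ m := by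
      rw [← eval_det_oneAddX]
      exact eval_eq_sum_range' ((natDegree_det_oneAddX_le (A y)).trans_lt (by omega)) t
    have hsum := HasFDerivAt.fun_sum (u := Finset.range (Fintype.card ι + k + 2)) fun m _ =>
      (hd m).hasFDerivAt.mul_const (t ^ m)
    have hjacobi := hasFDerivAt_det (A := fun y => 1 + t • A y) (A' := fun i j => t • A' i j)
      (x := x) fun i j => ((hA i j).const_smul t).const_add _
    simp only [hdet] at hjacobi
    have h := congrArg (· v) (hsum.unique hjacobi)
    simp only [← map_eval_adjugate_oneAddX] at h
    simp only [sum_apply, smul_apply, smul_eq_mul, Matrix.map_apply] at h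
    simp only [p, q, eval_finsetSum, eval_mul, eval_C, eval_pow, eval_X, Finset.mul_sum]
    simpa only [mul_comm, mul_left_comm] using h
  have hcoeff := congrArg (coeff · (k + 1)) hpq
  simpa [p, q, newtonT, finsetSum_coeff, coeff_X_pow] using hcoeff

lemma hasDerivAt_matSym {A : 𝕜 → Matrix ι ι 𝕜} {A' : Matrix ι ι 𝕜} {t : 𝕜}
    (hA : ∀ i j, HasDerivAt (fun s => A s i j) (A' i j) t) (k : ℕ) :
    HasDerivAt (fun s => matSym (A s) (k + 1)) (newtonT (A t) k * A').trace t := by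
  refine (hasFDerivAt_matSym (fun i j => (hA i j).hasFDerivAt) k).hasDerivAt.congr_deriv ?_
  simp only [sum_apply, smul_apply, ContinuousLinearMap.toSpanSingleton_apply, smul_eq_mul,
    one_mul, Matrix.trace, Matrix.diag_apply, Matrix.mul_apply]
  exact Finset.sum_comm

/-- Euler's identity for the `(k + 1)`-homogeneous function `matSym · (k + 1)`. -/
lemma trace_newtonT_mul_self (M : Matrix ι ι 𝕜) (k : ℕ) :
    (newtonT M k * M).trace = (k + 1) * matSym M (k + 1) := by
  have hline : HasDerivAt (fun s : 𝕜 => matSym (s • M) (k + 1))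
      (newtonT ((1 : 𝕜) • M) k * M).trace 1 := by
    refine hasDerivAt_matSym (fun i j => ?_) k
    simpa using (hasDerivAt_id (1 : 𝕜)).mul_const (M i j)
  simp only [matSym_smul] at hline
  have hpow := (hasDerivAt_pow (k + 1) (1 : 𝕜)).mul_const (matSym M (k + 1))
  simpa using hline.unique hpow

lemma differentiableAt_newtonT (hA : ∀ i j, DifferentiableAt 𝕜 (fun y => A y i j) x) (k : ℕ)
    (i j : ι) : DifferentiableAt 𝕜 (fun y => newtonT (A y) k i j) x := by
  induction k generalizing i j with
  | zero => simp only [newtonT_zero]; exact differentiableAt_const _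
  | succ k ih =>
    simp only [newtonT_succ, Matrix.sub_apply, Matrix.smul_apply, Matrix.mul_apply]
    exact ((differentiableAt_matSym hA (k + 1)).smul (differentiableAt_const _)).sub
      (DifferentiableAt.fun_sum fun l _ => (hA i l).mul (ih l j))

lemma contDiffOn_matSym {m : WithTop ℕ∞} {U : Set E}
    (hA : ∀ i j, ContDiffOn 𝕜 m (fun y => A y i j) U) (k : ℕ) :
    ContDiffOn 𝕜 m (fun y => matSym (A y) k) U := by
  simp only [matSym_eq_sum_minors, Matrix.det_apply']
  exact ContDiffOn.sum fun s _ => ContDiffOn.sum fun σ _ =>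
    contDiffOn_const.mul (contDiffOn_prod fun i _ => hA _ _)

lemma contDiffOn_newtonT {m : WithTop ℕ∞} {U : Set E}
    (hA : ∀ i j, ContDiffOn 𝕜 m (fun y => A y i j) U) (k : ℕ) (i j : ι) :
    ContDiffOn 𝕜 m (fun y => newtonT (A y) k i j) U := by
  induction k generalizing i j with
  | zero => simp only [newtonT_zero]; exact contDiffOn_const
  | succ k ih =>
    simp only [newtonT_succ, Matrix.sub_apply, Matrix.smul_apply, Matrix.mul_apply]
    exact ((contDiffOn_matSym hA (k + 1)).smul contDiffOn_const).sub
      (ContDiffOn.sum fun l _ => (hA i l).mul (ih l j))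

end Jacobi

section DoublyStochastic
variable {ι : Type*} [Fintype ι] [DecidableEq ι] {M : Matrix ι ι ℝ} {s : Set (ι → ℝ)}
  {f : (ι → ℝ) → ℝ} {x : ι → ℝ}
open Matrix

lemma exists_mulVec_eq_sum_comp_perm (hM : M ∈ doublyStochastic ℝ ι) :
    ∃ w : Equiv.Perm ι → ℝ, (∀ ρ, 0 ≤ w ρ) ∧ ∑ ρ, w ρ = 1 ∧
      ∀ x : ι → ℝ, M *ᵥ x = ∑ ρ, w ρ • (x ∘ ρ) := by
  obtain ⟨w, hw₀, hw₁, rfl⟩ := exists_eq_sum_perm_of_mem_doublyStochastic hM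
  exact ⟨w, hw₀, hw₁, fun x => by simp only [sum_mulVec, smul_mulVec, permMatrix_mulVec]⟩

lemma mulVec_mem_of_mem_doublyStochastic (hM : M ∈ doublyStochastic ℝ ι) (hs : Convex ℝ s)
    (hx : ∀ ρ : Equiv.Perm ι, x ∘ ρ ∈ s) : M *ᵥ x ∈ s := by
  obtain ⟨w, hw₀, hw₁, hw⟩ := exists_mulVec_eq_sum_comp_perm hM
  rw [hw]
  exact hs.sum_mem (fun ρ _ => hw₀ ρ) hw₁ fun ρ _ => hx ρ

lemma lt_map_mulVec_or_eq_comp_perm (hM : M ∈ doublyStochastic ℝ ι) (hf : StrictConcaveOn ℝ s f)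
    (hx : ∀ ρ : Equiv.Perm ι, x ∘ ρ ∈ s) (hfx : ∀ ρ : Equiv.Perm ι, f (x ∘ ρ) = f x) :
    f x < f (M *ᵥ x) ∨ ∃ ρ : Equiv.Perm ι, M *ᵥ x = x ∘ ρ := by
  obtain ⟨w, hw₀, hw₁, hw⟩ := exists_mulVec_eq_sum_comp_perm hM
  have hmean : ∑ ρ, w ρ • f (x ∘ ρ) = f x := by
    simp only [hfx, ← Finset.sum_smul, hw₁, one_smul]
  have jensen : f x ≤ f (M *ᵥ x) := by
    rw [hw, ← hmean]
    exact hf.concaveOn.le_map_sum (fun ρ _ => hw₀ ρ) hw₁ fun ρ _ => hx ρ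
  refine jensen.lt_or_eq.imp_right fun heq => ?_
  obtain ⟨ρ, -, hρ⟩ := Finset.exists_ne_zero_of_sum_ne_zero (hw₁ ▸ one_ne_zero)
  rw [hw, ← hmean] at heq
  exact ⟨ρ, (hw x).trans ((hf.map_sum_eq_iff' (fun ρ _ => hw₀ ρ) hw₁ fun ρ _ => hx ρ).1 heq.symm
    ρ (Finset.mem_univ ρ) hρ).symm⟩

end DoublyStochastic

section Spectral
variable {ι : Type*} [Fintype ι] [DecidableEq ι] {U X Y : Matrix ι ι ℝ} {k : ℕ}
open Matrix

lemma exists_orthogonal_diagonalization (hX : X.IsHermitian) :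
    ∃ U ∈ orthogonalGroup ι ℝ, ∃ d : ι → ℝ, X = U * diagonal d * Uᵀ :=
  ⟨hX.eigenvectorUnitary, hX.eigenvectorUnitary.2, hX.eigenvalues, hX.spectral_theorem⟩

lemma transpose_mul_conj_mul (hU : U ∈ orthogonalGroup ι ℝ) (A : Matrix ι ι ℝ) :
    Uᵀ * (U * A * Uᵀ) * U = A := by
  have h := (mem_orthogonalGroup_iff' ι ℝ).1 hU
  rw [Matrix.mul_assoc, Matrix.mul_assoc, h, Matrix.mul_one, ← Matrix.mul_assoc, h, Matrix.one_mul]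

lemma of_sq_mem_doublyStochastic (hU : U ∈ orthogonalGroup ι ℝ) :
    of (fun i j => U i j ^ 2) ∈ doublyStochastic ℝ ι := by
  refine mem_doublyStochastic_iff_sum.2 ⟨fun i j => sq_nonneg _, fun i => ?_, fun j => ?_⟩
  · simpa [mul_apply, ← sq] using congrFun₂ ((mem_orthogonalGroup_iff ι ℝ).1 hU) i i
  · simpa [mul_apply, ← sq] using congrFun₂ ((mem_orthogonalGroup_iff' ι ℝ).1 hU) j j

lemma diag_conj_diagonal (U : Matrix ι ι ℝ) (d : ι → ℝ) :
    (U * diagonal d * Uᵀ).diag = of (fun i j => U i j ^ 2) *ᵥ d := by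
  ext i
  simp only [diag_apply, mul_apply (N := Uᵀ), mul_diagonal, transpose_apply, mulVec, dotProduct,
    of_apply]
  exact Finset.sum_congr rfl fun j _ => by ring

lemma sum_sq_conj_diagonal (hU : U ∈ orthogonalGroup ι ℝ) (d : ι → ℝ) :
    ∑ i, ∑ j, (U * diagonal d * Uᵀ) i j ^ 2 = ∑ i, d i ^ 2 := by
  set X := U * diagonal d * Uᵀ with hX
  have hUU := (mem_orthogonalGroup_iff' ι ℝ).1 hU
  have htrace : (X * Xᵀ).trace = ∑ i, ∑ j, X i j ^ 2 := by
    simp only [trace, diag_apply, mul_apply, transpose_apply, sq]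
  have hconj : X * Xᵀ = U * (diagonal d * diagonal d) * Uᵀ := by
    simp only [hX, transpose_mul, transpose_transpose, diagonal_transpose, Matrix.mul_assoc]
    rw [← Matrix.mul_assoc Uᵀ U, hUU, Matrix.one_mul]
  rw [← htrace, hconj, trace_mul_comm, ← Matrix.mul_assoc, hUU, Matrix.one_mul,
    diagonal_mul_diagonal, trace_diagonal]
  exact Finset.sum_congr rfl fun i _ => (sq _).symm

lemma eq_diagonal_diag_of_sum_sq_le (h : ∑ i, ∑ j, X i j ^ 2 ≤ ∑ i, X i i ^ 2) :
    X = diagonal X.diag := by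
  have hrow (i : ι) : X i i ^ 2 ≤ ∑ j, X i j ^ 2 :=
    Finset.single_le_sum (f := fun j => X i j ^ 2) (fun j _ => sq_nonneg _) (Finset.mem_univ i)
  have hrow_eq := (Finset.sum_eq_sum_iff_of_le fun i _ => hrow i).1
    ((Finset.sum_le_sum fun i _ => hrow i).antisymm h)
  ext i j
  rcases eq_or_ne i j with rfl | hij
  · rw [diagonal_apply_eq, diag_apply]
  have hoff : ∑ l ∈ Finset.univ.erase i, X i l ^ 2 = 0 := by
    have := hrow_eq i (Finset.mem_univ i)
    rw [← Finset.add_sum_erase _ _ (Finset.mem_univ i)] at this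
    linarith
  rw [diagonal_apply_ne _ hij, ← sq_eq_zero_iff]
  exact (Finset.sum_eq_zero_iff_of_nonneg fun l _ => sq_nonneg _).1 hoff j
    (Finset.mem_erase.2 ⟨hij.symm, Finset.mem_univ j⟩)

/-- The diagonal of a symmetric matrix is a doubly stochastic image of its spectrum (Schur), and
strict log-concavity settles the equality case. -/
lemma matSym_lt_elemSym_diag_or_eq_diagonal (hX : X.PosSemidef) (hk : 2 ≤ k)
    (hXk : 0 < matSym X k) :
    0 < elemSym Finset.univ X.diag k ∧
      (matSym X k < elemSym Finset.univ X.diag k ∨ X = diagonal X.diag) := by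
  obtain ⟨U, hU, d, rfl⟩ := exists_orthogonal_diagonalization hX.isHermitian
  have hd : 0 ≤ d := fun i => by
    have := (hX.conjTranspose_mul_mul_same U).diag_nonneg (i := i)
    rwa [conjTranspose_eq_transpose_of_trivial, transpose_mul_conj_mul hU, diagonal_apply_eq]
      at this
  rw [matSym_conj ((mem_orthogonalGroup_iff ι ℝ).1 hU), matSym_diagonal] at hXk ⊢
  have hmem (ρ : Equiv.Perm ι) : d ∘ ρ ∈ {x : ι → ℝ | 0 ≤ x ∧ 0 < elemSym Finset.univ x k} :=
    ⟨fun i => hd (ρ i), by rwa [elemSym_univ_comp_perm]⟩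
  have hM := of_sq_mem_doublyStochastic hU
  have hdiag := diag_conj_diagonal U d
  have hpos : 0 < elemSym Finset.univ (U * diagonal d * Uᵀ).diag k := by
    rw [hdiag]
    exact (mulVec_mem_of_mem_doublyStochastic hM (convex_setOf_elemSym_pos _ k) hmem).2
  refine ⟨hpos, ?_⟩
  rcases lt_map_mulVec_or_eq_comp_perm hM (strictConcaveOn_log_elemSym hk) hmem
    (fun ρ => by rw [elemSym_univ_comp_perm]) with hlt | ⟨ρ, hρ⟩
  · rw [← hdiag] at hlt
    exact Or.inl ((log_lt_log_iff hXk hpos).1 hlt)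
  · refine Or.inr (eq_diagonal_diag_of_sum_sq_le (le_of_eq ?_))
    have hperm (i : ι) : (U * diagonal d * Uᵀ) i i = d (ρ i) := congrFun (hdiag.trans hρ) i
    simp only [sum_sq_conj_diagonal hU, hperm]
    exact (Equiv.sum_comp ρ fun i => d i ^ 2).symm

/-- Comparison with the diagonals in an orthonormal basis diagonalising the combination. -/
lemma exists_matSym_combo_eq_elemSym (hX : X.PosSemidef) (hXk : 0 < matSym X k)
    (hY : Y.PosSemidef) (hYk : 0 < matSym Y k) (hk : 2 ≤ k) {a b : ℝ} (ha : 0 ≤ a) (hb : 0 ≤ b) :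
    ∃ x y : ι → ℝ, (0 ≤ x ∧ 0 < elemSym Finset.univ x k) ∧ (0 ≤ y ∧ 0 < elemSym Finset.univ y k) ∧
      matSym X k ≤ elemSym Finset.univ x k ∧ matSym Y k ≤ elemSym Finset.univ y k ∧
      matSym (a • X + b • Y) k = elemSym Finset.univ (a • x + b • y) k ∧
      (X ≠ Y → x = y →
        matSym X k < elemSym Finset.univ x k ∨ matSym Y k < elemSym Finset.univ y k) := by
  obtain ⟨U, hU, d, hZ⟩ := exists_orthogonal_diagonalization
    ((hX.smul ha).add (hY.smul hb)).isHermitian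
  have hU₁ := (mem_orthogonalGroup_iff ι ℝ).1 hU
  have hU₂ := (mem_orthogonalGroup_iff' ι ℝ).1 hU
  have hconj {W : Matrix ι ι ℝ} (hW : W.PosSemidef) : (Uᵀ * W * U).PosSemidef := by
    simpa only [conjTranspose_eq_transpose_of_trivial] using hW.conjTranspose_mul_mul_same U
  obtain ⟨hXpos, hXcase⟩ := matSym_lt_elemSym_diag_or_eq_diagonal (hconj hX) hk
    (by rwa [matSym_conj hU₂])
  obtain ⟨hYpos, hYcase⟩ := matSym_lt_elemSym_diag_or_eq_diagonal (hconj hY) hk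
    (by rwa [matSym_conj hU₂])
  rw [matSym_conj hU₂] at hXcase hYcase
  have le_of_case {W : Matrix ι ι ℝ}
      (hW : matSym W k < elemSym Finset.univ (Uᵀ * W * U).diag k ∨
        Uᵀ * W * U = diagonal (Uᵀ * W * U).diag) :
      matSym W k ≤ elemSym Finset.univ (Uᵀ * W * U).diag k :=
    hW.elim le_of_lt fun h => by rw [← matSym_diagonal, ← h, matSym_conj hU₂]
  refine ⟨(Uᵀ * X * U).diag, (Uᵀ * Y * U).diag, ⟨fun i => (hconj hX).diag_nonneg, hXpos⟩,
    ⟨fun i => (hconj hY).diag_nonneg, hYpos⟩, le_of_case hXcase, le_of_case hYcase, ?_,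
    fun hne hdiag => ?_⟩
  · have hd : diagonal d = a • (Uᵀ * X * U) + b • (Uᵀ * Y * U) := by
      rw [← transpose_mul_conj_mul hU (diagonal d), ← hZ, Matrix.mul_add, Matrix.add_mul,
        Matrix.mul_smul, Matrix.smul_mul, Matrix.mul_smul, Matrix.smul_mul]
    rw [hZ, matSym_conj hU₁, matSym_diagonal, ← diag_smul, ← diag_smul, ← diag_add, ← hd,
      diag_diagonal]
  · refine hXcase.imp_right fun hXd => hYcase.resolve_right fun hYd => hne ?_
    have hconj_eq : Uᵀ * X * U = Uᵀ * Y * U := by rw [hXd, hYd, hdiag]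
    have hUt : Uᵀ ∈ orthogonalGroup ι ℝ := (mem_orthogonalGroup_iff ι ℝ).2 (by simpa using hU₂)
    have back (W : Matrix ι ι ℝ) : U * (Uᵀ * W * U) * Uᵀ = W := by
      simpa only [transpose_transpose] using transpose_mul_conj_mul hUt W
    rw [← back X, hconj_eq, back]

theorem strictConcaveOn_log_matSym (hk : 2 ≤ k) :
    StrictConcaveOn ℝ {X : Matrix ι ι ℝ | X.PosSemidef ∧ 0 < matSym X k}
      fun X => log (matSym X k) := by
  refine ⟨fun X ⟨hX, hXk⟩ Y ⟨hY, hYk⟩ a b ha hb hab => ?_,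
    fun X ⟨hX, hXk⟩ Y ⟨hY, hYk⟩ hne a b ha hb hab => ?_⟩
  · obtain ⟨x, y, hx, hy, -, -, hcombo, -⟩ :=
      exists_matSym_combo_eq_elemSym hX hXk hY hYk hk ha hb
    exact ⟨(hX.smul ha).add (hY.smul hb),
      hcombo ▸ (convex_setOf_elemSym_pos _ k hx hy ha hb hab).2⟩
  · obtain ⟨x, y, hx, hy, hXx, hYy, hcombo, hlt⟩ :=
      exists_matSym_combo_eq_elemSym hX hXk hY hYk hk ha.le hb.le
    have hXx' := mul_le_mul_of_nonneg_left (log_le_log hXk hXx) ha.le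
    have hYy' := mul_le_mul_of_nonneg_left (log_le_log hYk hYy) hb.le
    simp only [hcombo, smul_eq_mul]
    rcases eq_or_ne x y with rfl | hxy
    · rw [← add_smul, hab, one_smul]
      have hsum : log (elemSym Finset.univ x k) =
          a * log (elemSym Finset.univ x k) + b * log (elemSym Finset.univ x k) := by
        rw [← add_mul, hab, one_mul]
      rcases hlt hne rfl with h | h
      · linarith [mul_lt_mul_of_pos_left (log_lt_log hXk h) ha]
      · linarith [mul_lt_mul_of_pos_left (log_lt_log hYk h) hb]
    · have := (strictConcaveOn_log_elemSym hk).2 hx hy hxy ha hb hab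
      simp only [smul_eq_mul] at this
      linarith

lemma strictConcaveOn_comp_lineMap {E : Type*} [AddCommGroup E] [Module ℝ E] {s : Set E}
    {f : E → ℝ} (hf : StrictConcaveOn ℝ s f) {x y : E} (hx : x ∈ s) (hy : y ∈ s) (hne : x ≠ y) :
    StrictConcaveOn ℝ (Icc (0 : ℝ) 1) (f ∘ AffineMap.lineMap x y) := by
  have hmem {t : ℝ} (ht : t ∈ Icc (0 : ℝ) 1) : AffineMap.lineMap x y t ∈ s :=
    hf.1.segment_subset hx hy (segment_eq_image_lineMap ℝ x y ▸ mem_image_of_mem _ ht)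
  refine ⟨convex_Icc 0 1, fun t ht u hu htu a b ha hb hab => ?_⟩
  simp only [Function.comp_apply, Convex.combo_affine_apply hab]
  exact hf.2 (hmem ht) (hmem hu) ((AffineMap.lineMap_injective ℝ hne).ne htu) ha hb hab

/-- The tangent inequality for the strictly concave function `log ∘ σ_{k+1}`. -/
lemma lt_trace_newtonT_mul (hX : X.PosSemidef) (hY : Y.PosSemidef) (hk : 1 ≤ k)
    (hXY : matSym X (k + 1) = matSym Y (k + 1)) (hpos : 0 < matSym Y (k + 1)) (hne : X ≠ Y) :
    (k + 1) * matSym Y (k + 1) < (newtonT Y k * X).trace := by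
  set c := matSym Y (k + 1) with hc
  have hconcave := strictConcaveOn_comp_lineMap (strictConcaveOn_log_matSym (by omega : 2 ≤ k + 1))
    ⟨hY, hpos⟩ ⟨hX, hXY ▸ hpos⟩ hne.symm
  have hderiv : HasDerivAt (fun t : ℝ => log (matSym (AffineMap.lineMap Y X t) (k + 1)))
      ((newtonT Y k * (X - Y)).trace / c) 0 := by
    have hsym := hasDerivAt_matSym (A := fun t : ℝ => AffineMap.lineMap Y X t) (A' := X - Y)
      (t := 0) (fun i j => by
        simpa [AffineMap.lineMap_apply] using
          ((hasDerivAt_id (0 : ℝ)).mul_const (X i j - Y i j)).add_const (Y i j)) k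
    rw [AffineMap.lineMap_apply_zero] at hsym
    simpa only [AffineMap.lineMap_apply_zero] using hsym.log (by simpa using hpos.ne')
  have hslope := hconcave.slope_lt_of_hasDerivAt (left_mem_Icc.2 zero_le_one)
    (right_mem_Icc.2 zero_le_one) zero_lt_one hderiv
  have htrace : 0 < (newtonT Y k * (X - Y)).trace := by
    simpa [slope_def_field, hXY, ← hc, hpos] using hslope
  rw [Matrix.mul_sub, trace_sub, trace_newtonT_mul_self] at htrace
  linarith

lemma le_trace_newtonT_mul (hX : X.PosSemidef) (hY : Y.PosSemidef) (hk : 1 ≤ k)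
    (hXY : matSym X (k + 1) = matSym Y (k + 1)) (hpos : 0 < matSym Y (k + 1)) :
    (k + 1) * matSym Y (k + 1) ≤ (newtonT Y k * X).trace := by
  rcases eq_or_ne X Y with rfl | hne
  · rw [trace_newtonT_mul_self]
  · exact (lt_trace_newtonT_mul hX hY hk hXY hpos hne).le

end Spectral

section PartialDerivatives
variable {ι : Type*} [DecidableEq ι] {f g : EuclideanSpace ℝ ι → ℝ}
  {x : EuclideanSpace ℝ ι}

/-- The partial derivative in the `i`-th coordinate direction. -/
def pd (i : ι) (f : EuclideanSpace ℝ ι → ℝ) (x : EuclideanSpace ℝ ι) : ℝ :=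
  fderiv ℝ f x (EuclideanSpace.single i 1)

lemma pd_const (i : ι) (c : ℝ) (x : EuclideanSpace ℝ ι) : pd i (fun _ => c) x = 0 := by
  rw [pd, fderiv_const_apply, zero_apply]

lemma pd_congr (i : ι) (h : f =ᶠ[nhds x] g) : pd i f x = pd i g x := by
  rw [pd, pd, h.fderiv_eq]

section Finite
variable [Finite ι]

lemma pd_add (i : ι) (hf : DifferentiableAt ℝ f x) (hg : DifferentiableAt ℝ g x) :
    pd i (fun y => f y + g y) x = pd i f x + pd i g x := by
  have := Fintype.ofFinite ι
  rw [pd, fderiv_fun_add hf hg]; rfl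

lemma pd_sub (i : ι) (hf : DifferentiableAt ℝ f x) (hg : DifferentiableAt ℝ g x) :
    pd i (fun y => f y - g y) x = pd i f x - pd i g x := by
  have := Fintype.ofFinite ι
  rw [pd, fderiv_fun_sub hf hg]; rfl

lemma pd_mul (i : ι) (hf : DifferentiableAt ℝ f x) (hg : DifferentiableAt ℝ g x) :
    pd i (fun y => f y * g y) x = f x * pd i g x + g x * pd i f x := by
  have := Fintype.ofFinite ι
  rw [pd, fderiv_fun_mul hf hg]; rfl

lemma pd_sum {κ : Type*} (i : ι) (S : Finset κ) {f : κ → EuclideanSpace ℝ ι → ℝ}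
    (hf : ∀ a ∈ S, DifferentiableAt ℝ (f a) x) :
    pd i (fun y => ∑ a ∈ S, f a y) x = ∑ a ∈ S, pd i (f a) x := by
  have := Fintype.ofFinite ι
  rw [pd, fderiv_fun_sum hf, sum_apply]; rfl

end Finite

variable [Fintype ι]

lemma fderiv_apply_eq_sum_pd (f : EuclideanSpace ℝ ι → ℝ) (x v : EuclideanSpace ℝ ι) :
    fderiv ℝ f x v = ∑ i, v i * pd i f x := by
  conv_lhs => rw [← (EuclideanSpace.basisFun ι ℝ).sum_repr v]
  simp [pd]

lemma pd_matSym {A : EuclideanSpace ℝ ι → Matrix ι ι ℝ}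
    (hA : ∀ i j, DifferentiableAt ℝ (fun y => A y i j) x) (k : ℕ) (l : ι) :
    pd l (fun y => matSym (A y) (k + 1)) x =
      ∑ i, ∑ j, newtonT (A x) k i j * pd l (fun y => A y j i) x := by
  rw [pd, (hasFDerivAt_matSym (fun i j => (hA i j).hasFDerivAt) k).fderiv, Finset.sum_comm]
  simp only [sum_apply, smul_apply, smul_eq_mul, pd]

lemma sum_pd_newtonT {A : EuclideanSpace ℝ ι → Matrix ι ι ℝ}
    (hA : ∀ i j, DifferentiableAt ℝ (fun y => A y i j) x)
    (hcodazzi : ∀ i a j, pd i (fun y => A y a j) x = pd j (fun y => A y a i) x) (k : ℕ) (j : ι) :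
    ∑ i, pd i (fun y => newtonT (A y) k i j) x = 0 := by
  induction k generalizing j with
  | zero => simp only [newtonT_zero, pd_const, Finset.sum_const_zero]
  | succ k ih =>
    have hT := differentiableAt_newtonT hA k
    have hσ := differentiableAt_matSym hA (k + 1)
    have hpd (i : ι) : pd i (fun y => newtonT (A y) (k + 1) i j) x =
        (1 : Matrix ι ι ℝ) i j * pd i (fun y => matSym (A y) (k + 1)) x -
          ∑ a, (newtonT (A x) k i a * pd i (fun y => A y a j) x +
            A x a j * pd i (fun y => newtonT (A y) k i a) x) := by
      simp only [newtonT_succ, (commute_newtonT _ k).eq, Matrix.sub_apply, Matrix.smul_apply,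
        smul_eq_mul, Matrix.mul_apply]
      rw [pd_sub i (hσ.mul_const _) (.fun_sum fun a _ => (hT i a).fun_mul (hA a j)),
        pd_mul i hσ (differentiableAt_const _), pd_const, mul_zero, zero_add,
        pd_sum i _ fun a _ => (hT i a).fun_mul (hA a j)]
      exact congrArg _ (Finset.sum_congr rfl fun a _ => pd_mul i (hT i a) (hA a j))
    have hdiv : ∑ i, ∑ a, A x a j * pd i (fun y => newtonT (A y) k i a) x = 0 := by
      rw [Finset.sum_comm]
      simp only [← Finset.mul_sum, ih, mul_zero, Finset.sum_const_zero]
    have hgrad : ∑ i, (1 : Matrix ι ι ℝ) i j * pd i (fun y => matSym (A y) (k + 1)) x =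
        ∑ i, ∑ a, newtonT (A x) k i a * pd i (fun y => A y a j) x := by
      simp only [Matrix.one_apply, ite_mul, one_mul, zero_mul, Finset.sum_ite_eq',
        Finset.mem_univ, if_true, pd_matSym hA, hcodazzi]
    simp only [hpd, Finset.sum_sub_distrib, Finset.sum_add_distrib, hdiv, hgrad, add_zero,
      sub_self]

/-- The vector field `T (f ∇g - g ∇f)`, whose divergence is the symmetrised difference of
`f tr(T D²g)` and `g tr(T D²f)` when `T` is symmetric and divergence free. -/
def wronskianField (T : EuclideanSpace ℝ ι → Matrix ι ι ℝ) (f g : EuclideanSpace ℝ ι → ℝ) (i : ι)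
    (x : EuclideanSpace ℝ ι) : ℝ :=
  ∑ j, T x i j * (f x * pd j g x - g x * pd j f x)

lemma sum_pd_wronskianField {T : EuclideanSpace ℝ ι → Matrix ι ι ℝ}
    (hT : ∀ i j, DifferentiableAt ℝ (fun y => T y i j) x) (hsymm : (T x).IsSymm)
    (hdiv : ∀ j, ∑ i, pd i (fun y => T y i j) x = 0)
    (hf : DifferentiableAt ℝ f x) (hf' : ∀ j, DifferentiableAt ℝ (pd j f) x)
    (hg : DifferentiableAt ℝ g x) (hg' : ∀ j, DifferentiableAt ℝ (pd j g) x) :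
    ∑ i, pd i (wronskianField T f g i) x =
      f x * ∑ i, ∑ j, T x i j * pd i (pd j g) x - g x * ∑ i, ∑ j, T x i j * pd i (pd j f) x := by
  have hw (j : ι) := (hf.fun_mul (hg' j)).fun_sub (hg.fun_mul (hf' j))
  have hpd (i : ι) : pd i (wronskianField T f g i) x = ∑ j,
      (f x * (T x i j * pd i (pd j g) x) - g x * (T x i j * pd i (pd j f) x) +
        T x i j * (pd j g x * pd i f x - pd j f x * pd i g x) +
        (f x * pd j g x - g x * pd j f x) * pd i (fun y => T y i j) x) := by
    unfold wronskianField
    rw [pd_sum i _ fun j _ => (hT i j).fun_mul (hw j)]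
    refine Finset.sum_congr rfl fun j _ => ?_
    rw [pd_mul i (hT i j) (hw j), pd_sub i (hf.fun_mul (hg' j)) (hg.fun_mul (hf' j)),
      pd_mul i hf (hg' j), pd_mul i hg (hf' j)]
    ring
  have hdiv_term : ∑ i, ∑ j, (f x * pd j g x - g x * pd j f x) * pd i (fun y => T y i j) x = 0 := by
    rw [Finset.sum_comm]
    simp only [← Finset.mul_sum, hdiv, mul_zero, Finset.sum_const_zero]
  have hcross : ∑ i, ∑ j, T x i j * (pd j g x * pd i f x - pd j f x * pd i g x) = 0 := by
    simp only [mul_sub, Finset.sum_sub_distrib, sub_eq_zero]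
    rw [Finset.sum_comm]
    refine Finset.sum_congr rfl fun i _ => Finset.sum_congr rfl fun j _ => ?_
    rw [hsymm.apply i j]
    ring
  simp only [hpd, Finset.sum_add_distrib, Finset.sum_sub_distrib, hcross, hdiv_term, add_zero,
    Finset.mul_sum]

lemma sum_mul_wronskianField {T : EuclideanSpace ℝ ι → Matrix ι ι ℝ} (hT : (T x).IsSymm)
    (f g : EuclideanSpace ℝ ι → ℝ) {w v : EuclideanSpace ℝ ι} (hv : (T x).mulVec w = v) :
    ∑ i, w i * wronskianField T f g i x = f x * fderiv ℝ g x v - g x * fderiv ℝ f x v := by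
  simp only [wronskianField, fderiv_apply_eq_sum_pd _ _ v, ← hv, Matrix.mulVec, dotProduct,
    Finset.mul_sum, Finset.sum_mul, ← Finset.sum_sub_distrib]
  rw [Finset.sum_comm]
  refine Finset.sum_congr rfl fun j _ => Finset.sum_congr rfl fun i _ => ?_
  rw [hT.apply i j]
  ring

end PartialDerivatives

section Hessian
open scoped ContDiff
variable {n : ℕ} {U : Set (V n)} {f g h : V n → ℝ} {x : V n}

lemma differentiableAt_of_contDiffOn (hU : IsOpen U) (hf : ContDiffOn ℝ ∞ f U) (hx : x ∈ U) :
    DifferentiableAt ℝ f x :=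
  (hf.contDiffAt (hU.mem_nhds hx)).differentiableAt (by simp)

lemma contDiffOn_fderiv (hU : IsOpen U) (hf : ContDiffOn ℝ ∞ f U) :
    ContDiffOn ℝ ∞ (fderiv ℝ f) U :=
  hf.fderiv_of_isOpen hU (by simp)

lemma contDiffOn_pd (hU : IsOpen U) (hf : ContDiffOn ℝ ∞ f U) (i : Fin (n + 1)) :
    ContDiffOn ℝ ∞ (pd i f) U :=
  (contDiffOn_fderiv hU hf).clm_apply contDiffOn_const

lemma hessM_eq_pd (hU : IsOpen U) (hf : ContDiffOn ℝ ∞ f U) (hx : x ∈ U) (i j : Fin (n + 1)) :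
    hessM n f x i j = pd i (pd j f) x := by
  have hd : DifferentiableAt ℝ (fderiv ℝ f) x :=
    ((contDiffOn_fderiv hU hf).contDiffAt (hU.mem_nhds hx)).differentiableAt (by simp)
  have hpd : pd j f = fun y => fderiv ℝ f y (EuclideanSpace.single j 1) := rfl
  rw [hessM, pd, hpd, fderiv_clm_apply hd (by fun_prop)]
  simp

lemma hessM_isSymm (hU : IsOpen U) (hf : ContDiffOn ℝ ∞ f U) (hx : x ∈ U) :
    (hessM n f x).IsSymm := by
  have h := (hf.contDiffAt (hU.mem_nhds hx)).isSymmSndFDerivAt (by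
    simp only [minSmoothness_of_isRCLikeNormedField]
    exact WithTop.coe_le_coe.2 le_top)
  exact Matrix.IsSymm.ext fun i j => h _ _

lemma contDiffOn_hessM (hU : IsOpen U) (hf : ContDiffOn ℝ ∞ f U) (i j : Fin (n + 1)) :
    ContDiffOn ℝ ∞ (fun x => hessM n f x i j) U :=
  (contDiffOn_pd hU (contDiffOn_pd hU hf j) i).congr fun _ hx => hessM_eq_pd hU hf hx i j

lemma pd_hessM_comm (hU : IsOpen U) (hf : ContDiffOn ℝ ∞ f U) (hx : x ∈ U)
    (i a j : Fin (n + 1)) :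
    pd i (fun y => hessM n f y a j) x = pd j (fun y => hessM n f y a i) x := by
  have hess_eq (b : Fin (n + 1)) : (fun y => hessM n f y a b) =ᶠ[nhds x] pd b (pd a f) := by
    filter_upwards [hU.mem_nhds hx] with y hy
    rw [← hessM_eq_pd hU hf hy, (hessM_isSymm hU hf hy).apply]
  have ha := contDiffOn_pd hU hf a
  rw [pd_congr i (hess_eq j), pd_congr j (hess_eq i), ← hessM_eq_pd hU ha hx,
    ← hessM_eq_pd hU ha hx, (hessM_isSymm hU ha hx).apply]

/-- The vector field `T_k(D²h)(f ∇g - g ∇f)`. -/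
def newtonField (k : ℕ) (h f g : V n → ℝ) : Fin (n + 1) → V n → ℝ :=
  wronskianField (fun x => newtonT (hessM n h x) k) f g

lemma contDiffOn_newtonField (hU : IsOpen U) (hh : ContDiffOn ℝ ∞ h U) (hf : ContDiffOn ℝ ∞ f U)
    (hg : ContDiffOn ℝ ∞ g U) (k : ℕ) (i : Fin (n + 1)) :
    ContDiffOn ℝ ∞ (newtonField k h f g i) U := by
  unfold newtonField wronskianField
  exact ContDiffOn.sum fun j _ => (contDiffOn_newtonT (contDiffOn_hessM hU hh) k i j).mul
    ((hf.mul (contDiffOn_pd hU hg j)).sub (hg.mul (contDiffOn_pd hU hf j)))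

lemma sum_pd_newtonField (hU : IsOpen U) (hh : ContDiffOn ℝ ∞ h U) (hf : ContDiffOn ℝ ∞ f U)
    (hg : ContDiffOn ℝ ∞ g U) (k : ℕ) (hx : x ∈ U) :
    ∑ i, pd i (newtonField k h f g i) x = f x * (newtonT (hessM n h x) k * hessM n g x).trace -
      g x * (newtonT (hessM n h x) k * hessM n f x).trace := by
  have hH (i j : Fin (n + 1)) := differentiableAt_of_contDiffOn hU (contDiffOn_hessM hU hh i j) hx
  have htrace {w : V n → ℝ} (hw : ContDiffOn ℝ ∞ w U) :
      ∑ i, ∑ j, newtonT (hessM n h x) k i j * pd i (pd j w) x =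
        (newtonT (hessM n h x) k * hessM n w x).trace := by
    simp only [← hessM_eq_pd hU hw hx, Matrix.trace, Matrix.diag_apply, Matrix.mul_apply,
      (hessM_isSymm hU hw hx).apply]
  rw [newtonField, sum_pd_wronskianField (differentiableAt_newtonT hH k)
    (newtonT_isSymm (hessM_isSymm hU hh hx) k) (sum_pd_newtonT hH (pd_hessM_comm hU hh hx) k)
    (differentiableAt_of_contDiffOn hU hf hx)
    (fun j => differentiableAt_of_contDiffOn hU (contDiffOn_pd hU hf j) hx)
    (differentiableAt_of_contDiffOn hU hg hx)
    (fun j => differentiableAt_of_contDiffOn hU (contDiffOn_pd hU hg j) hx),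
    htrace hf, htrace hg]

end Hessian

section Homogeneity
variable {E F : Type*} [NormedAddCommGroup E] [NormedSpace ℝ E] [NormedAddCommGroup F]
  [NormedSpace ℝ F] {f : E → F} {x : E}

lemma smul_fderiv_smul_of_homogeneous {l c : ℝ} (h : ∀ᶠ y in nhds x, f (l • y) = c • f y) :
    l • fderiv ℝ f (l • x) = c • fderiv ℝ f x := by
  rw [← fderiv_comp_smul, Filter.EventuallyEq.fderiv_eq h]
  exact congrFun (fderiv_const_smul_field c) x

lemma fderiv_apply_self_of_homogeneous {p : ℕ} (hf : DifferentiableAt ℝ f x)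
    (h : ∀ᶠ t in nhds (1 : ℝ), f (t • x) = t ^ p • f x) : fderiv ℝ f x x = (p : ℝ) • f x := by
  have hray : HasDerivAt (fun t : ℝ => t • x) x 1 := by
    simpa using (hasDerivAt_id (1 : ℝ)).smul_const x
  have hpow : HasDerivAt (fun t : ℝ => t ^ p • f x) ((p : ℝ) • f x) 1 := by
    simpa using (hasDerivAt_pow p (1 : ℝ)).smul_const (f x)
  have hf' : HasFDerivAt f (fderiv ℝ f x) ((1 : ℝ) • x) := by
    rw [one_smul]
    exact hf.hasFDerivAt
  exact (hf'.comp_hasDerivAt (1 : ℝ) hray).unique (hpow.congr_of_eventuallyEq h)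

end Homogeneity

lemma exists_fderiv_eq_smul_of_const_on_level {E : Type*} [NormedAddCommGroup E] [NormedSpace ℝ E]
    [CompleteSpace E] {φ f : E → ℝ} {φ' f' : StrongDual ℝ E} {x : E}
    (hφ : HasStrictFDerivAt φ φ' x) (hφ' : φ' ≠ 0) (hf : HasStrictFDerivAt f f' x)
    (h : ∀ᶠ y in nhds x, φ y = φ x → f y = f x) : ∃ c : ℝ, f' = c • φ' := by
  have hext : IsLocalExtrOn f {y | φ y = φ x} x :=
    Or.inl (eventually_nhdsWithin_iff.2 (h.mono fun _ hy hyφ => (hy hyφ).ge))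
  obtain ⟨a, b, hab, h0⟩ := hext.exists_multipliers_of_hasStrictFDerivAt_1d hφ hf
  have hb : b ≠ 0 := by
    rintro rfl
    rw [zero_smul, add_zero, smul_eq_zero_iff_left hφ'] at h0
    exact hab (by rw [h0]; rfl)
  refine ⟨b⁻¹ * -a, ?_⟩
  rw [mul_smul, eq_inv_smul_iff₀ hb]
  exact (eq_neg_of_add_eq_zero_right h0).trans (neg_smul a φ').symm

lemma hasStrictFDerivAt_norm {E : Type*} [NormedAddCommGroup E] [InnerProductSpace ℝ E] {x : E}
    (hx : x ≠ 0) : HasStrictFDerivAt (fun y : E => ‖y‖) (‖x‖⁻¹ • innerSL ℝ x) x := by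
  have h := (hasStrictFDerivAt_norm_sq x).sqrt (by positivity)
  simp only [Real.sqrt_sq (norm_nonneg _)] at h
  convert h using 1
  rw [← Nat.cast_smul_eq_nsmul ℝ, smul_smul, one_div, mul_inv_rev, mul_assoc, Nat.cast_ofNat,
    inv_mul_cancel₀ two_ne_zero, mul_one]

section Cone
variable {n : ℕ} {θ : ℝ} {x : V n}

lemma Etop_last : Etop n (Fin.last n) = 1 := by simp [Etop]

lemma norm_Etop : ‖Etop n‖ = 1 := by simp [Etop]

lemma inner_Etop_right (x : V n) : ⟪x, Etop n⟫ = x (Fin.last n) := by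
  simp [Etop, EuclideanSpace.inner_single_right]

lemma sum_Etop_mul (w : Fin (n + 1) → ℝ) : ∑ i, Etop n i * w i = w (Fin.last n) := by
  simp [Etop]

/-- The 1-homogeneous defining function of the cone over the spherical cap. -/
def coneFn (n : ℕ) (θ : ℝ) (x : V n) : ℝ := x (Fin.last n) - cos θ * ‖x‖

/-- The interior of the cone over the spherical cap. -/
def openCone (n : ℕ) (θ : ℝ) : Set (V n) := {x | 0 < coneFn n θ x}

/-- The boundary of the cone over the spherical cap, without the apex. -/
def coneBdry (n : ℕ) (θ : ℝ) : Set (V n) := {x | x ≠ 0 ∧ coneFn n θ x = 0}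

lemma coneFn_zero : coneFn n θ 0 = 0 := by simp [coneFn]

lemma coneFn_smul {l : ℝ} (hl : 0 ≤ l) (x : V n) : coneFn n θ (l • x) = l * coneFn n θ x := by
  simp only [coneFn, norm_smul, Real.norm_of_nonneg hl, PiLp.smul_apply, smul_eq_mul]
  ring

lemma coneFn_add_smul_Etop (x : V n) {t : ℝ} (ht : 0 ≤ t) :
    coneFn n θ x + (1 - |cos θ|) * t ≤ coneFn n θ (x + t • Etop n) := by
  have hnorm : |‖x + t • Etop n‖ - ‖x‖| ≤ t := by
    simpa [norm_smul, norm_Etop, abs_of_nonneg ht] using abs_norm_sub_norm_le (x + t • Etop n) x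
  have hcos : cos θ * (‖x + t • Etop n‖ - ‖x‖) ≤ |cos θ| * t :=
    (le_abs_self _).trans (by rw [abs_mul]; gcongr)
  simp only [coneFn, PiLp.add_apply, PiLp.smul_apply, Etop_last, smul_eq_mul, mul_one]
  linarith

lemma continuous_coneFn : Continuous (coneFn n θ) := by
  unfold coneFn
  fun_prop

lemma hasStrictFDerivAt_coneFn (hx : x ≠ 0) :
    HasStrictFDerivAt (coneFn n θ)
      (EuclideanSpace.proj (Fin.last n) - cos θ • (‖x‖⁻¹ • innerSL ℝ x)) x :=
  (EuclideanSpace.proj (𝕜 := ℝ) (Fin.last n)).hasStrictFDerivAt.sub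
    ((hasStrictFDerivAt_norm hx).const_mul (cos θ))

lemma pd_coneFn (hx : x ≠ 0) (i : Fin (n + 1)) :
    pd i (coneFn n θ) x = Etop n i - cos θ * (‖x‖⁻¹ * x i) := by
  have hlast : (EuclideanSpace.single i (1 : ℝ) : V n) (Fin.last n) = Etop n i := by
    simp [Etop, eq_comm]
  rw [pd, (hasStrictFDerivAt_coneFn hx).hasFDerivAt.fderiv, ← hlast]
  simp [EuclideanSpace.inner_single_right]

lemma mem_coneCap : x ∈ coneCap n θ ↔ x ≠ 0 ∧ 0 ≤ coneFn n θ x := by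
  constructor
  · rintro ⟨l, hl, u, ⟨hu, huθ⟩, rfl⟩
    rw [coneFn_smul hl.le, coneFn, hu, mul_one]
    exact ⟨smul_ne_zero hl.ne' (norm_ne_zero_iff.1 (hu ▸ one_ne_zero)),
      mul_nonneg hl.le (sub_nonneg.2 huθ)⟩
  · rintro ⟨hx0, hx⟩
    have hp := norm_pos_iff.2 hx0
    have hunit : ‖‖x‖⁻¹ • x‖ = 1 := norm_smul_inv_norm hx0
    have hcone : 0 ≤ coneFn n θ (‖x‖⁻¹ • x) := by
      rw [coneFn_smul (inv_nonneg.2 hp.le)]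
      positivity
    rw [coneFn, hunit, mul_one, sub_nonneg] at hcone
    exact ⟨‖x‖, hp, ‖x‖⁻¹ • x, ⟨hunit, hcone⟩, (smul_inv_smul₀ hp.ne' x).symm⟩

lemma ne_zero_of_mem_coneCap (hx : x ∈ coneCap n θ) : x ≠ 0 := (mem_coneCap.1 hx).1

lemma smul_mem_coneCap {l : ℝ} (hl : 0 < l) (hx : x ∈ coneCap n θ) : l • x ∈ coneCap n θ := by
  rw [mem_coneCap] at hx ⊢
  exact ⟨smul_ne_zero hl.ne' hx.1, by rw [coneFn_smul hl.le]; exact mul_nonneg hl.le hx.2⟩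

lemma smul_mem_openCone {l : ℝ} (hl : 0 < l) (hx : x ∈ openCone n θ) : l • x ∈ openCone n θ := by
  rw [openCone, mem_ofPred_eq, coneFn_smul hl.le]
  exact mul_pos hl hx

lemma openCone_subset_coneCap : openCone n θ ⊆ coneCap n θ := fun x hx =>
  mem_coneCap.2 ⟨by rintro rfl; exact hx.ne' coneFn_zero, (le_of_lt hx)⟩

lemma coneBdry_subset_coneCap : coneBdry n θ ⊆ coneCap n θ := fun _ hx =>
  mem_coneCap.2 ⟨hx.1, hx.2.ge⟩

lemma sphCap_subset_coneCap : sphCap n θ ⊆ coneCap n θ := fun u hu =>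
  ⟨1, one_pos, u, hu, (one_smul ℝ u).symm⟩

lemma isOpen_openCone : IsOpen (openCone n θ) := isOpen_lt continuous_const continuous_coneFn

lemma add_smul_Etop_mem_openCone (hθ : |cos θ| < 1) (hx : x ∈ coneCap n θ) {t : ℝ} (ht : 0 < t) :
    x + t • Etop n ∈ openCone n θ :=
  (add_pos_of_nonneg_of_pos (mem_coneCap.1 hx).2 (mul_pos (sub_pos.2 hθ) ht)).trans_le
    (coneFn_add_smul_Etop x ht.le)

lemma coneCap_subset_closure_openCone (hθ : |cos θ| < 1) :
    coneCap n θ ⊆ closure (openCone n θ) := by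
  intro x hx
  have hlim : Filter.Tendsto (fun t : ℝ => x + t • Etop n) (nhdsWithin 0 (Ioi 0)) (nhds x) := by
    have hcont : Continuous fun t : ℝ => x + t • Etop n := by fun_prop
    simpa using (hcont.tendsto 0).mono_left nhdsWithin_le_nhds
  refine mem_closure_of_tendsto hlim ?_
  filter_upwards [self_mem_nhdsWithin] with t ht using add_smul_Etop_mem_openCone hθ hx ht

lemma eq_of_eqOn_openCone (hθ : |cos θ| < 1) {W : Type*} [TopologicalSpace W] [T2Space W]
    {F H : V n → W} (hx : x ∈ coneCap n θ) (hF : ContinuousAt F x) (hH : ContinuousAt H x)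
    (h : EqOn F H (openCone n θ)) : F x = H x := by
  have := mem_closure_iff_nhdsWithin_neBot.1 (coneCap_subset_closure_openCone hθ hx)
  exact tendsto_nhds_unique_of_eventuallyEq (hF.mono_left nhdsWithin_le_nhds)
    (hH.mono_left nhdsWithin_le_nhds) h.eventuallyEq_nhdsWithin

lemma coneFn_fderiv_ne_zero (hθ : |cos θ| < 1) (hx : x ∈ coneBdry n θ) :
    (EuclideanSpace.proj (Fin.last n) - cos θ • (‖x‖⁻¹ • innerSL ℝ x) :
      StrongDual ℝ (V n)) ≠ 0 := by
  intro h
  have hEtop : 1 - cos θ * (‖x‖⁻¹ * x (Fin.last n)) = 0 := by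
    simpa [Etop_last, inner_Etop_right] using DFunLike.congr_fun h (Etop n)
  rw [sub_eq_zero.1 hx.2, mul_comm (cos θ) ‖x‖, inv_mul_cancel_left₀ (norm_ne_zero_iff.2 hx.1),
    ← abs_mul_abs_self] at hEtop
  nlinarith [abs_nonneg (cos θ)]

end Cone

section CapHom
open scoped ContDiff
variable {n : ℕ} {θ : ℝ} {U : Set (V n)} {f g h : V n → ℝ} {x : V n}

/-- `f` is a capillary function in homogeneous form: smooth on the open set `U ⊇ coneCap n θ`,
positively 1-homogeneous on the cone, and satisfying the capillary boundary condition. -/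
structure IsCapHom (n : ℕ) (θ : ℝ) (U : Set (V n)) (f : V n → ℝ) : Prop where
  isOpen : IsOpen U
  subset : coneCap n θ ⊆ U
  smooth : ContDiffOn ℝ ∞ f U
  hom : ∀ l : ℝ, 0 < l → ∀ x ∈ coneCap n θ, f (l • x) = l * f x
  capillary : IsCapillaryF n θ f

namespace IsCapHom

lemma contDiffAt (hf : IsCapHom n θ U f) (hx : x ∈ coneCap n θ) : ContDiffAt ℝ ∞ f x :=
  hf.smooth.contDiffAt (hf.isOpen.mem_nhds (hf.subset hx))

lemma contDiffAt_fderiv (hf : IsCapHom n θ U f) (hx : x ∈ coneCap n θ) :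
    ContDiffAt ℝ ∞ (fderiv ℝ f) x :=
  (contDiffOn_fderiv hf.isOpen hf.smooth).contDiffAt (hf.isOpen.mem_nhds (hf.subset hx))

lemma differentiableAt (hf : IsCapHom n θ U f) (hx : x ∈ coneCap n θ) : DifferentiableAt ℝ f x :=
  (hf.contDiffAt hx).differentiableAt (by simp)

lemma differentiableAt_fderiv (hf : IsCapHom n θ U f) (hx : x ∈ coneCap n θ) :
    DifferentiableAt ℝ (fderiv ℝ f) x :=
  (hf.contDiffAt_fderiv hx).differentiableAt (by simp)

lemma continuousAt_fderiv_fderiv (hf : IsCapHom n θ U f) (hx : x ∈ coneCap n θ) :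
    ContinuousAt (fderiv ℝ (fderiv ℝ f)) x :=
  ((hf.contDiffAt_fderiv hx).fderiv_right (m := ∞) (by simp)).continuousAt

lemma fderiv_self (hf : IsCapHom n θ U f) (hx : x ∈ coneCap n θ) : fderiv ℝ f x x = f x := by
  have hhom : ∀ᶠ t in nhds (1 : ℝ), f (t • x) = t ^ 1 • f x := by
    filter_upwards [Ioi_mem_nhds one_pos] with t ht
    rw [pow_one, hf.hom t ht x hx, smul_eq_mul]
  simpa using fderiv_apply_self_of_homogeneous (hf.differentiableAt hx) hhom

lemma fderiv_smul (hf : IsCapHom n θ U f) (hθ : |cos θ| < 1) (hx : x ∈ coneCap n θ) {l : ℝ}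
    (hl : 0 < l) : fderiv ℝ f (l • x) = fderiv ℝ f x := by
  refine eq_of_eqOn_openCone (F := fun y => fderiv ℝ f (l • y)) hθ hx ?_
    (hf.contDiffAt_fderiv hx).continuousAt fun y hy => ?_
  · exact ContinuousAt.comp (f := fun y : V n => l • y)
      (hf.contDiffAt_fderiv (smul_mem_coneCap hl hx)).continuousAt (by fun_prop)
  · refine smul_right_injective _ hl.ne' (smul_fderiv_smul_of_homogeneous (c := l) ?_)
    filter_upwards [isOpen_openCone.mem_nhds hy] with z hz
      using hf.hom l hl z (openCone_subset_coneCap hz)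

lemma fderiv_Etop (hf : IsCapHom n θ U f) (hθ : |cos θ| < 1) (hx : x ∈ coneBdry n θ) :
    fderiv ℝ f x (Etop n) = 0 := by
  have hp := norm_pos_iff.2 hx.1
  have hlast : x (Fin.last n) = cos θ * ‖x‖ := sub_eq_zero.1 hx.2
  rw [← hf.fderiv_smul hθ (coneBdry_subset_coneCap hx) (inv_pos.2 hp)]
  refine hf.capillary _ ⟨norm_smul_inv_norm hx.1, ?_⟩
  rw [PiLp.smul_apply, hlast, smul_eq_mul, mul_comm, mul_inv_cancel_right₀ hp.ne']

lemma fderiv_fderiv_self (hf : IsCapHom n θ U f) (hθ : |cos θ| < 1) (hx : x ∈ coneCap n θ) :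
    fderiv ℝ (fderiv ℝ f) x x = 0 := by
  have hhom : ∀ᶠ t in nhds (1 : ℝ), fderiv ℝ f (t • x) = t ^ 0 • fderiv ℝ f x := by
    filter_upwards [Ioi_mem_nhds one_pos] with t ht
    rw [pow_zero, one_smul, hf.fderiv_smul hθ hx ht]
  simpa using fderiv_apply_self_of_homogeneous (hf.differentiableAt_fderiv hx) hhom

lemma fderiv_fderiv_smul (hf : IsCapHom n θ U f) (hθ : |cos θ| < 1) (hx : x ∈ coneCap n θ) {l : ℝ}
    (hl : 0 < l) : l • fderiv ℝ (fderiv ℝ f) (l • x) = fderiv ℝ (fderiv ℝ f) x := by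
  refine eq_of_eqOn_openCone (F := fun y => l • fderiv ℝ (fderiv ℝ f) (l • y)) hθ hx ?_
    (hf.continuousAt_fderiv_fderiv hx) fun y hy => ?_
  · exact (ContinuousAt.comp (f := fun y : V n => l • y)
      (hf.continuousAt_fderiv_fderiv (smul_mem_coneCap hl hx)) (by fun_prop)).const_smul l
  · refine (smul_fderiv_smul_of_homogeneous (c := 1) ?_).trans (one_smul ℝ _)
    filter_upwards [isOpen_openCone.mem_nhds hy] with z hz
    rw [one_smul, hf.fderiv_smul hθ (openCone_subset_coneCap hz) hl]

lemma hessM_smul (hf : IsCapHom n θ U f) (hθ : |cos θ| < 1) (hx : x ∈ coneCap n θ) {l : ℝ}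
    (hl : 0 < l) : l • hessM n f (l • x) = hessM n f x := by
  ext i j
  rw [hessM, ← hf.fderiv_fderiv_smul hθ hx hl]
  rfl

lemma hessM_mulVec_self (hf : IsCapHom n θ U f) (hθ : |cos θ| < 1) (hx : x ∈ coneCap n θ) :
    (hessM n f x).mulVec x = 0 := by
  ext i
  have hess_eq (j : Fin (n + 1)) : hessM n f x i j = pd j (pd i f) x := by
    rw [← hessM_eq_pd hf.isOpen hf.smooth (hf.subset hx),
      (hessM_isSymm hf.isOpen hf.smooth (hf.subset hx)).apply]
  have hray : fderiv ℝ (pd i f) x x = 0 := by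
    have hpd : pd i f = fun y => fderiv ℝ f y (EuclideanSpace.single i 1) := rfl
    rw [hpd, fderiv_clm_apply (hf.differentiableAt_fderiv hx) (by fun_prop)]
    simp [hf.fderiv_fderiv_self hθ hx]
  rw [fderiv_apply_eq_sum_pd] at hray
  simpa only [Matrix.mulVec, dotProduct, hess_eq, mul_comm, Pi.zero_apply] using hray

/- On the boundary the vertical derivative of `f` is constantly zero, so its gradient, which is the
last column of the Hessian, is normal to the boundary. -/
lemma hessM_mulVec_Etop_mem_span (hf : IsCapHom n θ U f) (hθ : |cos θ| < 1)
    (hx : x ∈ coneBdry n θ) :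
    (hessM n f x).mulVec (Etop n) ∈ Submodule.span ℝ {(Etop n).ofLp, x.ofLp} := by
  have hxU := hf.subset (coneBdry_subset_coneCap hx)
  have hsmooth : ContDiffAt ℝ ∞ (pd (Fin.last n) f) x :=
    (contDiffOn_pd hf.isOpen hf.smooth _).contDiffAt (hf.isOpen.mem_nhds hxU)
  obtain ⟨c, hc⟩ := exists_fderiv_eq_smul_of_const_on_level (hasStrictFDerivAt_coneFn hx.1)
    (coneFn_fderiv_ne_zero hθ hx) (hsmooth.hasStrictFDerivAt (by simp)) (by
      filter_upwards [isOpen_ne.mem_nhds hx.1] with y hy0 hy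
      exact (hf.fderiv_Etop hθ ⟨hy0, hy.trans hx.2⟩).trans (hf.fderiv_Etop hθ hx).symm)
  refine Submodule.mem_span_pair.2 ⟨c, -(c * (cos θ * ‖x‖⁻¹)), ?_⟩
  ext i
  have hcol : (hessM n f x).mulVec (Etop n) i =
      fderiv ℝ (pd (Fin.last n) f) x (EuclideanSpace.single i 1) := by
    rw [Etop, PiLp.ofLp_single, Matrix.mulVec_single_one, Matrix.col_apply,
      hessM_eq_pd hf.isOpen hf.smooth hxU, pd]
  have hgrad : fderiv ℝ (pd (Fin.last n) f) x (EuclideanSpace.single i 1) =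
      c * pd i (coneFn n θ) x := by
    rw [hc, pd, (hasStrictFDerivAt_coneFn hx.1).hasFDerivAt.fderiv]
    rfl
  rw [hcol, hgrad, pd_coneFn hx.1, Pi.add_apply, Pi.smul_apply, Pi.smul_apply, smul_eq_mul,
    smul_eq_mul]
  ring

lemma newtonT_mulVec_Etop_mem_span (hf : IsCapHom n θ U f) (hθ : |cos θ| < 1)
    (hx : x ∈ coneBdry n θ) (k : ℕ) :
    (newtonT (hessM n f x) k).mulVec (Etop n) ∈ Submodule.span ℝ {(Etop n).ofLp, x.ofLp} := by
  refine newtonT_mulVec_mem (fun v hv => ?_) (Submodule.subset_span (mem_insert _ _)) k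
  obtain ⟨a, b, rfl⟩ := Submodule.mem_span_pair.1 hv
  rw [Matrix.mulVec_add, Matrix.mulVec_smul, Matrix.mulVec_smul,
    hf.hessM_mulVec_self hθ (coneBdry_subset_coneCap hx), smul_zero, add_zero]
  exact Submodule.smul_mem _ _ (hf.hessM_mulVec_Etop_mem_span hθ hx)

lemma sum_coord_mul_newtonField (hh : IsCapHom n θ U h) (hf : IsCapHom n θ U f)
    (hg : IsCapHom n θ U g) (hθ : |cos θ| < 1) (hx : x ∈ coneCap n θ) (k : ℕ) :
    ∑ i, x i * newtonField k h f g i x = 0 := by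
  have hT := newtonT_mulVec_of_mulVec_eq_zero (hh.hessM_mulVec_self hθ hx) k
  rw [newtonField, sum_mul_wronskianField
    (newtonT_isSymm (hessM_isSymm hh.isOpen hh.smooth (hh.subset hx)) k) f g
    (v := matSym (hessM n h x) k • x) hT, map_smul, map_smul, hf.fderiv_self hx, hg.fderiv_self hx,
    smul_eq_mul, smul_eq_mul]
  ring

lemma newtonField_last (hh : IsCapHom n θ U h) (hf : IsCapHom n θ U f) (hg : IsCapHom n θ U g)
    (hθ : |cos θ| < 1) (hx : x ∈ coneBdry n θ) (k : ℕ) :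
    newtonField k h f g (Fin.last n) x = 0 := by
  have hxC := coneBdry_subset_coneCap hx
  obtain ⟨a, b, hab⟩ := Submodule.mem_span_pair.1 (hh.newtonT_mulVec_Etop_mem_span hθ hx k)
  rw [← sum_Etop_mul fun i => newtonField k h f g i x, newtonField, sum_mul_wronskianField
    (newtonT_isSymm (hessM_isSymm hh.isOpen hh.smooth (hh.subset hxC)) k) f g
    (v := a • Etop n + b • x) hab.symm]
  simp only [map_add, map_smul, hf.fderiv_self hxC, hg.fderiv_self hxC, hf.fderiv_Etop hθ hx,
    hg.fderiv_Etop hθ hx, smul_eq_mul]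
  ring

end IsCapHom

end CapHom

section Asymptotics
variable {X E F : Type*} [TopologicalSpace X] [SeminormedAddCommGroup E] [SeminormedAddCommGroup F]
  {K : Set X} {f : X → E} {g : X → F}

open Asymptotics in
lemma isBigO_principal_of_isCompact (hK : IsCompact K) (h : ∀ x ∈ K, f =O[nhdsWithin x K] g) :
    f =O[Filter.principal K] g := by
  refine hK.induction_on (p := fun s => f =O[Filter.principal s] g) ?_
    (fun s t hst ht => ?_) (fun s t hs ht => ?_) fun x hx => ?_
  · rw [Filter.principal_empty]
    exact isBigO_bot f g
  · exact ht.mono (Filter.principal_mono.2 hst)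
  · rw [← Filter.sup_principal]
    exact hs.sup ht
  · obtain ⟨C, hC⟩ := (h x hx).bound
    exact ⟨_, hC, isBigO_principal.2 ⟨C, fun _ hy => hy⟩⟩

end Asymptotics

section CutOff
open scoped ContDiff
variable {n : ℕ} {θ m : ℝ} {x : V n}

lemma exists_coneFn_sub_smul_Etop_eq_zero (hθ : |cos θ| < 1) (hx : 0 ≤ coneFn n θ x) :
    ∃ s, 0 ≤ s ∧ s ≤ coneFn n θ x / (1 - |cos θ|) ∧ coneFn n θ (x - s • Etop n) = 0 := by
  have hgap : 0 < 1 - |cos θ| := sub_pos.2 hθ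
  set t := coneFn n θ x / (1 - |cos θ|) with ht
  have ht0 : 0 ≤ t := div_nonneg hx hgap.le
  have hend : coneFn n θ (x - t • Etop n) ≤ 0 := by
    have hgrow := coneFn_add_smul_Etop (θ := θ) (x - t • Etop n) ht0
    rw [sub_add_cancel, ht, mul_div_cancel₀ _ hgap.ne', ← ht] at hgrow
    linarith
  have hcont : ContinuousOn (fun s : ℝ => coneFn n θ (x - s • Etop n)) (Icc 0 t) :=
    (continuous_coneFn.comp (by fun_prop)).continuousOn
  obtain ⟨s, hs, hs0⟩ := intermediate_value_Icc' ht0 hcont ⟨hend, by simpa using hx⟩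
  exact ⟨s, hs.1, hs.2, hs0⟩

lemma isBigO_coneFn_of_mem_coneBdry (hθ : |cos θ| < 1) {F : V n → ℝ} (hx : x ∈ coneBdry n θ)
    (hF : ContDiffAt ℝ 1 F x) (hF0 : ∀ y ∈ coneBdry n θ, F y = 0) :
    F =O[nhdsWithin x (coneCap n θ)] coneFn n θ := by
  have hgap : 0 < 1 - |cos θ| := sub_pos.2 hθ
  obtain ⟨L, t, ht, hL⟩ := hF.exists_lipschitzOnWith
  obtain ⟨r, hr, hrt⟩ := Metric.mem_nhds_iff.1 (Filter.inter_mem ht (isOpen_ne.mem_nhds hx.1))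
  have hnear : ∀ᶠ y in nhds x, dist y x + coneFn n θ y / (1 - |cos θ|) < r :=
    ((continuous_id.dist continuous_const).add
      (continuous_coneFn.div_const _)).continuousAt.eventually_lt continuousAt_const
        (by simpa [hx.2] using hr)
  refine Asymptotics.IsBigO.of_bound (L / (1 - |cos θ|)) ?_
  filter_upwards [nhdsWithin_le_nhds hnear, self_mem_nhdsWithin] with y hy hyC
  have hy0 := (mem_coneCap.1 hyC).2
  have hyr : dist y x < r := lt_of_le_of_lt (le_add_of_nonneg_right (div_nonneg hy0 hgap.le)) hy
  obtain ⟨s, hs0, hs, hsy⟩ := exists_coneFn_sub_smul_Etop_eq_zero hθ hy0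
  have hdist : dist y (y - s • Etop n) = s := by
    rw [dist_eq_norm, sub_sub_cancel, norm_smul, norm_Etop, Real.norm_of_nonneg hs0, mul_one]
  have hfoot : y - s • Etop n ∈ Metric.ball x r := by
    have := dist_triangle_left (y - s • Etop n) x y
    rw [Metric.mem_ball]
    linarith
  have hFfoot : F (y - s • Etop n) = 0 := hF0 _ ⟨(hrt hfoot).2, hsy⟩
  have hlip := hL.dist_le_mul y (hrt hyr).1 _ (hrt hfoot).1
  rw [hFfoot, dist_zero_right, hdist] at hlip
  calc ‖F y‖ ≤ L * s := hlip
    _ ≤ L * (coneFn n θ y / (1 - |cos θ|)) := by gcongr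
    _ = L / (1 - |cos θ|) * ‖coneFn n θ y‖ := by rw [Real.norm_of_nonneg hy0]; ring

lemma isBigO_coneFn_of_mem_coneCap (hθ : |cos θ| < 1) {F : V n → ℝ} (hx : x ∈ coneCap n θ)
    (hF : ContDiffAt ℝ 1 F x) (hF0 : ∀ y ∈ coneBdry n θ, F y = 0) :
    F =O[nhdsWithin x (coneCap n θ)] coneFn n θ := by
  obtain ⟨hx0, hxθ⟩ := mem_coneCap.1 hx
  rcases hxθ.lt_or_eq with hpos | hzero
  · have hne : ∀ᶠ y in nhds x, coneFn n θ y ≠ 0 :=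
      continuous_coneFn.continuousAt.eventually_ne hpos.ne'
    exact (Asymptotics.isBigO_of_div_tendsto_nhds (hne.mono fun y hy hy0 => absurd hy0 hy) _
      (hF.continuousAt.div continuous_coneFn.continuousAt hpos.ne')).mono nhdsWithin_le_nhds
  · exact isBigO_coneFn_of_mem_coneBdry hθ ⟨hx0, hzero.symm⟩ hF hF0

/-- The smooth bump on the line from which the radial cut-off `shellFn` is built. -/
def shellBump : ContDiffBump (2 : ℝ) := ⟨1 / 2, 1, by norm_num, by norm_num⟩

/-- A radial cut-off function, positive exactly on the shell `1 < ‖x‖² < 3`. -/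
def shellFn {n : ℕ} (x : V n) : ℝ := shellBump (‖x‖ ^ 2)

/-- A cut-off function vanishing for `coneFn n θ x ≤ 1 / m` and equal to one for
`2 / m ≤ coneFn n θ x`. -/
def cutFn (n : ℕ) (θ m : ℝ) (x : V n) : ℝ := smoothTransition (m * coneFn n θ x - 1)

/-- The part of the closed cone in a compact shell containing the support of `shellFn`. -/
def coneShell (n : ℕ) (θ : ℝ) : Set (V n) :=
  {x | 1 ≤ ‖x‖ ^ 2 ∧ ‖x‖ ^ 2 ≤ 3 ∧ 0 ≤ coneFn n θ x}

lemma shellFn_nonneg (x : V n) : 0 ≤ shellFn x := shellBump.nonneg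

lemma shellFn_le_one (x : V n) : shellFn x ≤ 1 := shellBump.le_one

lemma shellFn_ne_zero_iff : shellFn x ≠ 0 ↔ 1 < ‖x‖ ^ 2 ∧ ‖x‖ ^ 2 < 3 := by
  have hsupp : shellFn x ≠ 0 ↔ |‖x‖ ^ 2 - 2| < 1 := by
    rw [shellFn, ← Function.mem_support, shellBump.support_eq, Metric.mem_ball, Real.dist_eq]
    rfl
  rw [hsupp, abs_lt]
  constructor <;> rintro ⟨hlow, hhigh⟩ <;> constructor <;> linarith

lemma contDiff_shellFn : ContDiff ℝ ∞ (shellFn (n := n)) :=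
  shellBump.contDiff.comp (contDiff_norm_sq ℝ)

lemma pd_shellFn (i : Fin (n + 1)) (x : V n) :
    pd i shellFn x = deriv shellBump (‖x‖ ^ 2) * (2 * x i) := by
  have hbump : HasDerivAt shellBump (deriv shellBump (‖x‖ ^ 2)) (‖x‖ ^ 2) :=
    ((shellBump.contDiff (n := 1)).differentiable (by simp) _).hasDerivAt
  have hcomp : HasFDerivAt shellFn _ x :=
    hbump.comp_hasFDerivAt x (hasStrictFDerivAt_norm_sq x).hasFDerivAt
  rw [pd, hcomp.fderiv]
  simp [EuclideanSpace.inner_single_right]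

lemma contDiffAt_cutFn (m : ℝ) (hx : x ≠ 0) : ContDiffAt ℝ ∞ (cutFn n θ m) x := by
  have hlast : ContDiff ℝ ∞ fun y : V n => y (Fin.last n) :=
    (EuclideanSpace.proj (𝕜 := ℝ) (Fin.last n)).contDiff
  have hcone : ContDiffAt ℝ ∞ (coneFn n θ) x :=
    hlast.contDiffAt.sub (contDiffAt_const.mul (contDiffAt_norm ℝ hx))
  exact smoothTransition.contDiff.contDiffAt.comp x
    ((contDiffAt_const.mul hcone).sub contDiffAt_const)

lemma pd_cutFn (m : ℝ) (i : Fin (n + 1)) (hx : x ≠ 0) :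
    pd i (cutFn n θ m) x = deriv smoothTransition (m * coneFn n θ x - 1) *
      (m * (Etop n i - cos θ * (‖x‖⁻¹ * x i))) := by
  have htrans : HasDerivAt smoothTransition (deriv smoothTransition (m * coneFn n θ x - 1))
      (m * coneFn n θ x - 1) :=
    ((smoothTransition.contDiff (n := 1)).differentiable (by simp) _).hasDerivAt
  have hcone := (hasStrictFDerivAt_coneFn (θ := θ) hx).hasFDerivAt
  have hcomp : HasFDerivAt (cutFn n θ m) _ x :=
    htrans.comp_hasFDerivAt x ((hcone.const_mul m).sub_const 1)
  rw [← pd_coneFn hx, pd, pd, hcomp.fderiv, hcone.fderiv]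
  rfl

lemma cutFn_nonneg (x : V n) : 0 ≤ cutFn n θ m x := smoothTransition.nonneg _

lemma cutFn_le_one (x : V n) : cutFn n θ m x ≤ 1 := smoothTransition.le_one _

lemma cutFn_of_mul_coneFn_le_one (h : m * coneFn n θ x ≤ 1) : cutFn n θ m x = 0 :=
  smoothTransition.zero_of_nonpos (sub_nonpos.2 h)

lemma cutFn_of_two_le_mul_coneFn (h : 2 ≤ m * coneFn n θ x) : cutFn n θ m x = 1 :=
  smoothTransition.one_of_one_le (by linarith)

lemma deriv_smoothTransition_of_one_lt {t : ℝ} (ht : 1 < t) : deriv smoothTransition t = 0 := by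
  have hone : smoothTransition =ᶠ[nhds t] fun _ => 1 := by
    filter_upwards [Ioi_mem_nhds ht] with s hs using smoothTransition.one_of_one_le (le_of_lt hs)
  rw [hone.deriv_eq, deriv_const]

lemma abs_deriv_smoothTransition_mul_le {A C c a : ℝ}
    (hA : ∀ t ∈ Icc (-1) 1, |deriv smoothTransition t| ≤ A) (hm : 0 ≤ m) (hc : 0 ≤ c)
    (hC : 0 ≤ C) (ha : |a| ≤ C * c) :
    |deriv smoothTransition (m * c - 1) * (m * a)| ≤ 2 * A * C := by
  have hA0 : 0 ≤ A := (abs_nonneg _).trans (hA 0 (by norm_num))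
  rcases lt_or_ge 1 (m * c - 1) with hlarge | hsmall
  · rw [deriv_smoothTransition_of_one_lt hlarge, zero_mul, abs_zero]
    positivity
  · have hmem : m * c - 1 ∈ Icc (-1) 1 := ⟨by linarith [mul_nonneg hm hc], hsmall⟩
    rw [abs_mul, abs_mul, abs_of_nonneg hm]
    calc |deriv smoothTransition (m * c - 1)| * (m * |a|) ≤ A * (m * (C * c)) := by
          gcongr; exact hA _ hmem
      _ = A * C * (m * c) := by ring
      _ ≤ A * C * 2 := by gcongr; linarith
      _ = 2 * A * C := by ring

lemma coneShell_subset_coneCap : coneShell n θ ⊆ coneCap n θ := fun _ hx =>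
  mem_coneCap.2 ⟨by rintro rfl; norm_num [coneShell] at hx, hx.2.2⟩

lemma isCompact_coneShell : IsCompact (coneShell n θ) := by
  refine (isCompact_closedBall (0 : V n) 2).of_isClosed_subset ?_ fun x hx => ?_
  · exact (isClosed_le continuous_const (continuous_norm.pow 2)).inter
      ((isClosed_le (continuous_norm.pow 2) continuous_const).inter
        (isClosed_le continuous_const continuous_coneFn))
  · rw [mem_closedBall_zero_iff]
    nlinarith [hx.2.1]

lemma mem_coneShell_of_shellFn_ne_zero (hx : shellFn x ≠ 0) (hxθ : 0 ≤ coneFn n θ x) :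
    x ∈ coneShell n θ :=
  ⟨(shellFn_ne_zero_iff.1 hx).1.le, (shellFn_ne_zero_iff.1 hx).2.le, hxθ⟩

lemma shellFn_mul_cutFn_eq_zero (hm : 0 < m) (hx : x ∉ coneShell n θ) :
    shellFn x * cutFn n θ m x = 0 := by
  by_cases hshell : shellFn x = 0
  · rw [hshell, zero_mul]
  · have hneg : coneFn n θ x < 0 := by
      by_contra! hnonneg
      exact hx (mem_coneShell_of_shellFn_ne_zero hshell hnonneg)
    rw [cutFn_of_mul_coneFn_le_one (by nlinarith), mul_zero]

lemma exists_abs_le_coneFn (hθ : |cos θ| < 1) {F : V n → ℝ}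
    (hF : ∀ x ∈ coneCap n θ, ContDiffAt ℝ 1 F x) (hF0 : ∀ x ∈ coneBdry n θ, F x = 0) :
    ∃ C, 0 ≤ C ∧ ∀ x ∈ coneShell n θ, |F x| ≤ C * coneFn n θ x := by
  have hbig : F =O[Filter.principal (coneShell n θ)] coneFn n θ :=
    isBigO_principal_of_isCompact isCompact_coneShell fun x hx =>
      (isBigO_coneFn_of_mem_coneCap hθ (coneShell_subset_coneCap hx)
        (hF x (coneShell_subset_coneCap hx)) hF0).mono (nhdsWithin_mono x coneShell_subset_coneCap)
  obtain ⟨C, hC, hbound⟩ := hbig.exists_nonneg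
  refine ⟨C, hC, fun x hx => ?_⟩
  simpa [abs_of_nonneg hx.2.2] using Asymptotics.isBigOWith_principal.1 hbound x hx

end CutOff

section TangentField
open scoped ContDiff
variable {n : ℕ} {θ m : ℝ} {U : Set (V n)} {X Y : Fin (n + 1) → V n → ℝ} {x : V n}

lemma integrable_pd {f : V n → ℝ} (hf : ContDiff ℝ 1 f) (hs : HasCompactSupport f)
    (i : Fin (n + 1)) : Integrable (pd i f) :=
  ((hf.continuous_fderiv (by simp)).clm_apply continuous_const).integrable_of_hasCompactSupport
    (hs.fderiv_apply ℝ _)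

lemma integral_pd_eq_zero {f : V n → ℝ} (hf : ContDiff ℝ 1 f) (hs : HasCompactSupport f)
    (i : Fin (n + 1)) : ∫ x, pd i f x = 0 := by
  have hint : Integrable fun x => fderiv ℝ f x (EuclideanSpace.single i 1) := integrable_pd hf hs i
  have hparts := integral_mul_fderiv_eq_neg_fderiv_mul_of_integrable
    (μ := (volume : Measure (V n))) (f := fun _ => (1 : ℝ)) (g := f)
    (v := EuclideanSpace.single i 1) (by simp) (by simpa using hint)
    (by simpa using hf.continuous.integrable_of_hasCompactSupport hs)
    (fun x _ => differentiableAt_const _) (fun x _ => hf.differentiable (by simp) x)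
  simpa [pd] using hparts

/-- A smooth vector field, given by its components `X i`, on an open set `U` containing the cone
that is tangent to the spheres centred at the origin and to the boundary of the cone. The latter is
expressed by `X (Fin.last n) = 0`, which is tangency for fields tangent to the spheres. -/
structure IsTangentField (n : ℕ) (θ : ℝ) (U : Set (V n)) (X : Fin (n + 1) → V n → ℝ) : Prop where
  isOpen : IsOpen U
  subset : coneCap n θ ⊆ U
  smooth : ∀ i, ContDiffOn ℝ ∞ (X i) U
  sphere : ∀ x ∈ coneCap n θ, ∑ i, x i * X i x = 0
  bdry : ∀ x ∈ coneBdry n θ, X (Fin.last n) x = 0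

lemma IsCapHom.isTangentField_newtonField {h f g : V n → ℝ} (hh : IsCapHom n θ U h)
    (hf : IsCapHom n θ U f) (hg : IsCapHom n θ U g) (hθ : |cos θ| < 1) (k : ℕ) :
    IsTangentField n θ U (newtonField k h f g) where
  isOpen := hh.isOpen
  subset := hh.subset
  smooth := contDiffOn_newtonField hh.isOpen hh.smooth hf.smooth hg.smooth k
  sphere _ hx := hh.sum_coord_mul_newtonField hf hg hθ hx k
  bdry _ hx := hh.newtonField_last hf hg hθ hx k

/-- The vector field `X` cut off to a compact subset of the open cone. -/
def cutField (θ m : ℝ) (X : Fin (n + 1) → V n → ℝ) (i : Fin (n + 1)) (x : V n) : ℝ :=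
  shellFn x * cutFn n θ m x * X i x

namespace IsTangentField

lemma add (hX : IsTangentField n θ U X) (hY : IsTangentField n θ U Y) :
    IsTangentField n θ U fun i x => X i x + Y i x where
  isOpen := hX.isOpen
  subset := hX.subset
  smooth i := (hX.smooth i).add (hY.smooth i)
  sphere x hx := by
    simp only [mul_add, Finset.sum_add_distrib, hX.sphere x hx, hY.sphere x hx, add_zero]
  bdry x hx := by rw [hX.bdry x hx, hY.bdry x hx, add_zero]

lemma contDiffAt (hX : IsTangentField n θ U X) (hx : x ∈ coneCap n θ) (i : Fin (n + 1)) :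
    ContDiffAt ℝ ∞ (X i) x :=
  (hX.smooth i).contDiffAt (hX.isOpen.mem_nhds (hX.subset hx))

lemma continuousOn_sum_pd (hX : IsTangentField n θ U X) :
    ContinuousOn (fun x => ∑ i, pd i (X i) x) U :=
  continuousOn_finsetSum _ fun i _ => (contDiffOn_pd hX.isOpen (hX.smooth i) i).continuousOn

lemma contDiff_cutField (hX : IsTangentField n θ U X) (hm : 0 < m) (i : Fin (n + 1)) :
    ContDiff ℝ 1 (cutField θ m X i) := by
  rw [contDiff_iff_contDiffAt]
  intro x
  by_cases hx : x ∈ coneShell n θ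
  · have hxC := coneShell_subset_coneCap hx
    exact ((contDiff_shellFn.contDiffAt.mul (contDiffAt_cutFn m (ne_zero_of_mem_coneCap hxC))).mul
      (hX.contDiffAt hxC i)).of_le (by simp)
  · refine contDiffAt_const (c := (0 : ℝ)).congr_of_eventuallyEq ?_
    filter_upwards [isCompact_coneShell.isClosed.isOpen_compl.mem_nhds hx] with y hy
    rw [cutField, shellFn_mul_cutFn_eq_zero hm hy, zero_mul]

lemma sum_pd_cutField (hX : IsTangentField n θ U X) (m : ℝ) (hx : x ∈ coneCap n θ) :
    ∑ i, pd i (cutField θ m X i) x = shellFn x * cutFn n θ m x * ∑ i, pd i (X i) x +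
      shellFn x * (deriv smoothTransition (m * coneFn n θ x - 1) * (m * X (Fin.last n) x)) := by
  have hx0 := ne_zero_of_mem_coneCap hx
  have hshell : DifferentiableAt ℝ (shellFn (n := n)) x :=
    contDiff_shellFn.contDiffAt.differentiableAt (by simp)
  have hcut : DifferentiableAt ℝ (cutFn n θ m) x :=
    (contDiffAt_cutFn m hx0).differentiableAt (by simp)
  have hpd (i : Fin (n + 1)) : pd i (cutField θ m X i) x =
      shellFn x * cutFn n θ m x * pd i (X i) x +
        shellFn x * (deriv smoothTransition (m * coneFn n θ x - 1) * (m * (Etop n i * X i x))) +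
        (cutFn n θ m x * deriv shellBump (‖x‖ ^ 2) * 2 -
          shellFn x * (deriv smoothTransition (m * coneFn n θ x - 1) * m * cos θ * ‖x‖⁻¹)) *
          (x i * X i x) := by
    unfold cutField
    rw [pd_mul _ (hshell.fun_mul hcut) ((hX.contDiffAt hx i).differentiableAt (by simp)),
      pd_mul _ hshell hcut, pd_shellFn, pd_cutFn m i hx0]
    ring
  simp only [hpd, Finset.sum_add_distrib, ← Finset.mul_sum, hX.sphere x hx,
    sum_Etop_mul fun i => X i x, mul_zero, add_zero]

end IsTangentField

lemma hasCompactSupport_cutField (hm : 0 < m) (X : Fin (n + 1) → V n → ℝ) (i : Fin (n + 1)) :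
    HasCompactSupport (cutField θ m X i) :=
  HasCompactSupport.intro (isCompact_coneShell (θ := θ)) fun x hx => by
    rw [cutField, shellFn_mul_cutFn_eq_zero hm hx, zero_mul]

lemma pd_cutField_of_notMem_openCone (hm : 0 < m) (X : Fin (n + 1) → V n → ℝ) (i j : Fin (n + 1))
    (hx : x ∉ openCone n θ) : pd j (cutField θ m X i) x = 0 := by
  have hxθ : coneFn n θ x ≤ 0 := not_lt.1 hx
  have hzero : cutField θ m X i =ᶠ[nhds x] fun _ => 0 := by
    have hsmall : ∀ᶠ y in nhds x, m * coneFn n θ y < 1 :=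
      (continuous_const.mul continuous_coneFn).continuousAt.eventually_lt continuousAt_const
        ((mul_nonpos_of_nonneg_of_nonpos hm.le hxθ).trans_lt one_pos)
    filter_upwards [hsmall] with y hy
    rw [cutField, cutFn_of_mul_coneFn_le_one hy.le, mul_zero, zero_mul]
  rw [pd_congr j hzero, pd_const]

namespace IsTangentField

lemma integrable_sum_pd_cutField (hX : IsTangentField n θ U X) (hm : 0 < m) :
    Integrable fun x => ∑ i, pd i (cutField θ m X i) x :=
  integrable_finsetSum _ fun i _ =>
    integrable_pd (hX.contDiff_cutField hm i) (hasCompactSupport_cutField hm X i) i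

lemma integral_sum_pd_cutField (hX : IsTangentField n θ U X) (hm : 0 < m) :
    ∫ x in openCone n θ, ∑ i, pd i (cutField θ m X i) x = 0 := by
  rw [setIntegral_eq_integral_of_forall_compl_eq_zero fun x hx =>
      Finset.sum_eq_zero fun i _ => pd_cutField_of_notMem_openCone hm X i i hx,
    integral_finsetSum _ fun i _ =>
      integrable_pd (hX.contDiff_cutField hm i) (hasCompactSupport_cutField hm X i) i]
  exact Finset.sum_eq_zero fun i _ =>
    integral_pd_eq_zero (hX.contDiff_cutField hm i) (hasCompactSupport_cutField hm X i) i

/- The derivative of the cut-off at the boundary is of order `m`, but it is only felt where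
`coneFn ≤ 2 / m`, and there `X (Fin.last n)` is of order `1 / m` since it vanishes on the
boundary. -/
lemma exists_bound_sum_pd_cutField (hX : IsTangentField n θ U X) (hθ : |cos θ| < 1) :
    ∃ M, ∀ m > 0, ∀ x ∈ openCone n θ,
      ‖∑ i, pd i (cutField θ m X i) x‖ ≤ (coneShell n θ).indicator (fun _ => M) x := by
  obtain ⟨A, hA⟩ := isCompact_Icc.exists_bound_of_continuousOn (s := Icc (-1 : ℝ) 1)
    ((smoothTransition.contDiff (n := 1)).continuous_deriv (by simp)).continuousOn
  obtain ⟨B, hB⟩ := isCompact_coneShell.exists_bound_of_continuousOn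
    (hX.continuousOn_sum_pd.mono (coneShell_subset_coneCap.trans hX.subset))
  obtain ⟨C, hC, hXC⟩ := exists_abs_le_coneFn hθ (F := X (Fin.last n))
    (fun x hx => (hX.contDiffAt hx _).of_le (by simp)) hX.bdry
  refine ⟨B + 2 * A * C, fun m hm x hx => ?_⟩
  rw [hX.sum_pd_cutField m (openCone_subset_coneCap hx)]
  by_cases hshell : shellFn x = 0
  · simp only [hshell, zero_mul, add_zero, norm_zero]
    refine indicator_nonneg (fun y hy => ?_) _
    have hA0 : 0 ≤ A := (norm_nonneg _).trans (hA 0 (by norm_num))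
    have hB0 : 0 ≤ B := (norm_nonneg _).trans (hB y hy)
    positivity
  · have hxS := mem_coneShell_of_shellFn_ne_zero hshell (le_of_lt hx)
    rw [indicator_of_mem hxS]
    refine (norm_add_le _ _).trans (add_le_add ?_ ?_)
    · rw [norm_mul, norm_mul, Real.norm_of_nonneg (shellFn_nonneg x),
        Real.norm_of_nonneg (cutFn_nonneg x)]
      exact (mul_le_of_le_one_left (norm_nonneg _)
        (mul_le_one₀ (shellFn_le_one x) (cutFn_nonneg x) (cutFn_le_one x))).trans (hB x hxS)
    · rw [norm_mul, Real.norm_of_nonneg (shellFn_nonneg x)]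
      exact (mul_le_of_le_one_left (norm_nonneg _) (shellFn_le_one x)).trans
        (abs_deriv_smoothTransition_mul_le hA hm.le (le_of_lt hx) hC (hXC x hxS))

lemma tendsto_sum_pd_cutField (hX : IsTangentField n θ U X) (hx : x ∈ openCone n θ) :
    Filter.Tendsto (fun m => ∑ i, pd i (cutField θ m X i) x) Filter.atTop
      (nhds (shellFn x * ∑ i, pd i (X i) x)) := by
  have hxθ : 0 < coneFn n θ x := hx
  refine tendsto_const_nhds.congr' ?_
  filter_upwards [Filter.eventually_gt_atTop (2 / coneFn n θ x)] with m hm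
  rw [div_lt_iff₀ hxθ] at hm
  rw [hX.sum_pd_cutField m (openCone_subset_coneCap hx), cutFn_of_two_le_mul_coneFn hm.le,
    deriv_smoothTransition_of_one_lt (by linarith)]
  ring

lemma integral_shellFn_mul_sum_pd (hX : IsTangentField n θ U X) (hθ : |cos θ| < 1) :
    ∫ x in openCone n θ, shellFn x * ∑ i, pd i (X i) x = 0 := by
  obtain ⟨M, hM⟩ := hX.exists_bound_sum_pd_cutField hθ
  have hlim : Filter.Tendsto (fun m => ∫ x in openCone n θ, ∑ i, pd i (cutField θ m X i) x)
      Filter.atTop (nhds (∫ x in openCone n θ, shellFn x * ∑ i, pd i (X i) x)) := by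
    refine tendsto_integral_filter_of_dominated_convergence
      ((coneShell n θ).indicator fun _ => M) ?_ ?_ ?_ ?_
    · filter_upwards [Filter.eventually_gt_atTop 0] with m hm
        using (hX.integrable_sum_pd_cutField hm).aestronglyMeasurable.restrict
    · filter_upwards [Filter.eventually_gt_atTop 0] with m hm
        using ae_restrict_of_forall_mem isOpen_openCone.measurableSet (hM m hm)
    · exact ((integrable_indicator_iff isCompact_coneShell.measurableSet).2
        (integrableOn_const isCompact_coneShell.measure_ne_top)).restrict
    · exact ae_restrict_of_forall_mem isOpen_openCone.measurableSet fun x hx =>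
        hX.tendsto_sum_pd_cutField hx
  refine tendsto_nhds_unique (hlim.congr' ?_) tendsto_const_nhds
  filter_upwards [Filter.eventually_gt_atTop 0] with m hm using hX.integral_sum_pd_cutField hm

lemma integrableOn_shellFn_mul_sum_pd (hX : IsTangentField n θ U X) :
    IntegrableOn (fun x => shellFn x * ∑ i, pd i (X i) x) (openCone n θ) := by
  have hcont : ContinuousOn (fun x => shellFn x * ∑ i, pd i (X i) x) (coneShell n θ) :=
    contDiff_shellFn.continuous.continuousOn.mul
      (hX.continuousOn_sum_pd.mono (coneShell_subset_coneCap.trans hX.subset))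
  refine (hcont.integrableOn_compact isCompact_coneShell).of_forall_sdiff_eq_zero
    isOpen_openCone.measurableSet ?_
  rintro y ⟨hy, hyS⟩
  by_contra hne
  exact hyS (mem_coneShell_of_shellFn_ne_zero (left_ne_zero_of_mul hne) (le_of_lt hy))

lemma sum_pd_eq_zero_of_nonneg (hX : IsTangentField n θ U X) (hθ : |cos θ| < 1)
    (hdiv : ∀ x ∈ openCone n θ, 0 ≤ ∑ i, pd i (X i) x) (hx : x ∈ openCone n θ)
    (hx1 : 1 < ‖x‖ ^ 2) (hx3 : ‖x‖ ^ 2 < 3) : ∑ i, pd i (X i) x = 0 := by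
  have hae : (fun x => shellFn x * ∑ i, pd i (X i) x) =ᵐ[volume.restrict (openCone n θ)] 0 :=
    (setIntegral_eq_zero_iff_of_nonneg_ae
      (ae_restrict_of_forall_mem isOpen_openCone.measurableSet fun y hy =>
        mul_nonneg (shellFn_nonneg y) (hdiv y hy))
      hX.integrableOn_shellFn_mul_sum_pd).1 (hX.integral_shellFn_mul_sum_pd hθ)
  have hcont : ContinuousOn (fun x => shellFn x * ∑ i, pd i (X i) x) (openCone n θ) :=
    contDiff_shellFn.continuous.continuousOn.mul
      (hX.continuousOn_sum_pd.mono (openCone_subset_coneCap.trans hX.subset))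
  have hzero := Measure.eqOn_open_of_ae_eq hae isOpen_openCone hcont continuousOn_const hx
  exact (mul_eq_zero.1 hzero).resolve_left (shellFn_ne_zero_iff.2 ⟨hx1, hx3⟩)

end IsTangentField

end TangentField

section SecondDerivative
variable {E : Type*} [NormedAddCommGroup E] [NormedSpace ℝ E] {f : E → ℝ} {x y v : E}

lemma hasDerivAt_add_smul (x v : E) (t : ℝ) : HasDerivAt (fun t : ℝ => x + t • v) v t := by
  simpa using ((hasDerivAt_id t).smul_const v).const_add x

lemma hasDerivAt_fderiv_add_smul {t : ℝ} (hf : DifferentiableAt ℝ (fderiv ℝ f) (x + t • v)) :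
    HasDerivAt (fun t : ℝ => fderiv ℝ f (x + t • v) v)
      (fderiv ℝ (fderiv ℝ f) (x + t • v) v v) t := by
  have hline : HasDerivAt (fun t : ℝ => fderiv ℝ f (x + t • v))
      (fderiv ℝ (fderiv ℝ f) (x + t • v) v) t :=
    hf.hasFDerivAt.comp_hasDerivAt t (hasDerivAt_add_smul x v t)
  simpa using hline.clm_apply (hasDerivAt_const t v)

lemma add_smul_sub_mem_segment {t : ℝ} (ht : t ∈ Icc (0 : ℝ) 1) :
    x + t • (y - x) ∈ segment ℝ x y := by
  rw [segment_eq_image']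
  exact mem_image_of_mem _ ht

lemma fderiv_apply_sub_le (hf : ∀ z ∈ segment ℝ x y, DifferentiableAt ℝ f z)
    (hf' : ∀ z ∈ segment ℝ x y, DifferentiableAt ℝ (fderiv ℝ f) z)
    (hnonneg : ∀ z ∈ segment ℝ x y, 0 ≤ fderiv ℝ (fderiv ℝ f) z (y - x) (y - x)) :
    fderiv ℝ f x (y - x) ≤ f y - f x := by
  have hderiv (t : ℝ) (ht : t ∈ Icc (0 : ℝ) 1) :=
    (hf _ (add_smul_sub_mem_segment ht)).hasFDerivAt.comp_hasDerivAt t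
      (hasDerivAt_add_smul x (y - x) t)
  have hconv : ConvexOn ℝ (Icc 0 1) (f ∘ fun t : ℝ => x + t • (y - x)) :=
    convexOn_of_hasDerivWithinAt2_nonneg (convex_Icc 0 1)
      (fun t ht => (hderiv t ht).continuousAt.continuousWithinAt)
      (fun t ht => (hderiv t (interior_subset ht)).hasDerivWithinAt)
      (fun t ht => (hasDerivAt_fderiv_add_smul
        (hf' _ (add_smul_sub_mem_segment (interior_subset ht)))).hasDerivWithinAt)
      fun t ht => hnonneg _ (add_smul_sub_mem_segment (interior_subset ht))
  simpa [slope_def_field] using hconv.le_slope_of_hasDerivAt (left_mem_Icc.2 zero_le_one)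
    (right_mem_Icc.2 zero_le_one) one_pos (hderiv 0 (left_mem_Icc.2 zero_le_one))

lemma fderiv_apply_lt_of_pos (hf' : ∀ z ∈ segment ℝ x (x + v), DifferentiableAt ℝ (fderiv ℝ f) z)
    (hpos : ∀ z ∈ segment ℝ x (x + v), 0 < fderiv ℝ (fderiv ℝ f) z v v) :
    fderiv ℝ f x v < fderiv ℝ f (x + v) v := by
  have hseg (t : ℝ) (ht : t ∈ Icc (0 : ℝ) 1) : x + t • v ∈ segment ℝ x (x + v) := by
    simpa using add_smul_sub_mem_segment (x := x) (y := x + v) ht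
  have hderiv (t : ℝ) (ht : t ∈ Icc (0 : ℝ) 1) := hasDerivAt_fderiv_add_smul (hf' _ (hseg t ht))
  have hmono : StrictMonoOn (fun t : ℝ => fderiv ℝ f (x + t • v) v) (Icc 0 1) :=
    strictMonoOn_of_deriv_pos (convex_Icc 0 1)
      (fun t ht => (hderiv t ht).continuousAt.continuousWithinAt) fun t ht => by
        rw [(hderiv t (interior_subset ht)).deriv]
        exact hpos _ (hseg t (interior_subset ht))
  simpa using hmono (left_mem_Icc.2 zero_le_one) (right_mem_Icc.2 zero_le_one) one_pos

end SecondDerivative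

section HessianAlgebra
open scoped ContDiff
variable {n : ℕ} {U : Set (V n)} {f g : V n → ℝ} {x : V n}

lemma hessM_sub (hU : IsOpen U) (hf : ContDiffOn ℝ ∞ f U) (hg : ContDiffOn ℝ ∞ g U)
    (hx : x ∈ U) : hessM n (fun y => f y - g y) x = hessM n f x - hessM n g x := by
  ext i j
  rw [Matrix.sub_apply, hessM_eq_pd hU hf hx, hessM_eq_pd hU hg hx, hessM_eq_pd hU (hf.sub hg) hx,
    ← pd_sub i (differentiableAt_of_contDiffOn hU (contDiffOn_pd hU hf j) hx)
      (differentiableAt_of_contDiffOn hU (contDiffOn_pd hU hg j) hx)]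
  refine pd_congr i ?_
  filter_upwards [hU.mem_nhds hx] with y hy
  exact pd_sub j (differentiableAt_of_contDiffOn hU hf hy) (differentiableAt_of_contDiffOn hU hg hy)

lemma hessM_clm (L : StrongDual ℝ (V n)) (x : V n) : hessM n (fun y => L y) x = 0 := by
  have hL : fderiv ℝ (fun y => L y) = fun _ => L := funext fun _ => L.fderiv
  ext i j
  simp [hessM, hL]

lemma hessQ_eq_dotProduct (f : V n → ℝ) (x v w : V n) :
    hessQ n f x v w = v.ofLp ⬝ᵥ (hessM n f x).mulVec w := by
  have hsum (v : V n) : v = ∑ i, v i • (EuclideanSpace.single i (1 : ℝ) : V n) := by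
    simpa using ((EuclideanSpace.basisFun (Fin (n + 1)) ℝ).sum_repr v).symm
  conv_lhs => rw [hessQ, hsum v, hsum w]
  simp only [hessM, dotProduct, Matrix.mulVec, Finset.mul_sum, map_sum, map_smul, sum_apply,
    smul_apply, smul_eq_mul]
  rw [Finset.sum_comm]
  exact Finset.sum_congr rfl fun i _ => Finset.sum_congr rfl fun j _ => by ring

end HessianAlgebra

section Convexity
variable {n : ℕ} {θ : ℝ} {U U' : Set (V n)} {f g s G : V n → ℝ} {x y : V n}

lemma exists_mem_coneBdry_apply_zero_ne_zero (hn : 1 ≤ n) (hθ : |cos θ| < 1) :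
    ∃ y ∈ coneBdry n θ, y 0 ≠ 0 := by
  have hlast : Fin.last n ≠ 0 := Fin.last_eq_zero_iff.not.2 (by omega)
  have hsin : sin θ ≠ 0 := fun h => by
    have hcos := sin_sq_add_cos_sq θ
    rw [h, ← sq_abs (cos θ)] at hcos
    nlinarith [abs_nonneg (cos θ)]
  set y : V n := EuclideanSpace.single 0 (sin θ) + EuclideanSpace.single (Fin.last n) (cos θ)
    with hy
  have hy0 : y 0 = sin θ := by simp [hy, hlast.symm]
  have hylast : y (Fin.last n) = cos θ := by simp [hy, hlast]
  have hnorm : ‖y‖ = 1 := by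
    rw [← sq_eq_sq₀ (norm_nonneg y) zero_le_one, hy, norm_add_sq_real,
      EuclideanSpace.inner_single_left]
    simp [hlast.symm, sin_sq_add_cos_sq]
  refine ⟨y, ⟨norm_ne_zero_iff.1 (by simp [hnorm]), ?_⟩, hy0 ▸ hsin⟩
  rw [coneFn, hylast, hnorm, mul_one, sub_self]

lemma last_pos_of_mem_openCone (hθ : 0 ≤ cos θ) (hx : x ∈ openCone n θ) : 0 < x (Fin.last n) :=
  (mul_nonneg hθ (norm_nonneg x)).trans_lt (sub_pos.1 hx)

lemma convex_openCone (hθ : 0 ≤ cos θ) : Convex ℝ (openCone n θ) := by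
  have hconc : ConcaveOn ℝ univ (coneFn n θ) :=
    ((EuclideanSpace.proj (𝕜 := ℝ) (Fin.last n)).toLinearMap.concaveOn convex_univ).sub
      (convexOn_univ_norm.smul hθ)
  simpa [openCone] using hconc.convex_gt 0

lemma IsHomExt.exists_isCapHom (hext : IsHomExt n θ ⊤ s G) (hcap : IsCapillaryF n θ G) :
    ∃ U, IsCapHom n θ U G := by
  obtain ⟨⟨U, hU, hsub, hsmooth⟩, hhom, -⟩ := hext
  refine ⟨U, hU, hsub, hsmooth, ?_, hcap⟩
  rintro l hl x ⟨t, ht, u, hu, rfl⟩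
  rw [smul_smul, hhom _ (mul_pos hl ht) u hu, hhom t ht u hu, mul_assoc]

lemma isCapHom_clm (hU : IsOpen U) (hsub : coneCap n θ ⊆ U) {L : StrongDual ℝ (V n)}
    (hL : L (Etop n) = 0) : IsCapHom n θ U (fun x => L x) where
  isOpen := hU
  subset := hsub
  smooth := L.contDiff.contDiffOn
  hom l _ x _ := by rw [map_smul, smul_eq_mul]
  capillary x _ := by rw [L.fderiv, hL]

namespace IsCapHom

lemma mono (hf : IsCapHom n θ U f) (hU' : IsOpen U') (hsub : coneCap n θ ⊆ U') (h : U' ⊆ U) :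
    IsCapHom n θ U' f :=
  ⟨hU', hsub, hf.smooth.mono h, hf.hom, hf.capillary⟩

lemma sub (hf : IsCapHom n θ U f) (hg : IsCapHom n θ U g) :
    IsCapHom n θ U (fun x => f x - g x) where
  isOpen := hf.isOpen
  subset := hf.subset
  smooth := hf.smooth.sub hg.smooth
  hom l hl x hx := by rw [hf.hom l hl x hx, hg.hom l hl x hx, mul_sub]
  capillary u hu := by
    have huC : u ∈ coneCap n θ := sphCap_subset_coneCap ⟨hu.1, hu.2.ge⟩
    rw [fderiv_fun_sub (hf.differentiableAt huC) (hg.differentiableAt huC), sub_apply,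
      hf.capillary u hu, hg.capillary u hu, sub_zero]

lemma hessQ_smul (hf : IsCapHom n θ U f) (hθ : |cos θ| < 1) (hx : x ∈ coneCap n θ) {l : ℝ}
    (hl : 0 < l) (v w : V n) : l * hessQ n f (l • x) v w = hessQ n f x v w := by
  rw [hessQ, hessQ, ← hf.fderiv_fderiv_smul hθ hx hl]
  rfl

lemma hessQ_nonneg (hf : IsCapHom n θ U f) (hθ : |cos θ| < 1) (hτ : TauNonneg n θ f)
    (hx : x ∈ coneCap n θ) (v : V n) : 0 ≤ hessQ n f x v v := by
  obtain ⟨l, hl, u, hu, rfl⟩ := hx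
  refine nonneg_of_mul_nonneg_right ?_ hl
  rw [hf.hessQ_smul hθ (sphCap_subset_coneCap hu) hl]
  exact hτ u hu v

lemma posSemidef_hessM (hf : IsCapHom n θ U f) (hθ : |cos θ| < 1) (hτ : TauNonneg n θ f)
    (hx : x ∈ coneCap n θ) : (hessM n f x).PosSemidef := by
  refine .of_dotProduct_mulVec_nonneg ?_ fun v => ?_
  · rw [Matrix.IsHermitian, Matrix.conjTranspose_eq_transpose_of_trivial]
    exact hessM_isSymm hf.isOpen hf.smooth (hf.subset hx)
  · simpa [hessQ_eq_dotProduct] using hf.hessQ_nonneg hθ hτ hx (WithLp.toLp 2 v)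

lemma hessQ_sub_smul_self (hf : IsCapHom n θ U f) (hθ : |cos θ| < 1) (hx : x ∈ coneCap n θ)
    (v : V n) (c : ℝ) : hessQ n f x (v - c • x) (v - c • x) = hessQ n f x v v := by
  have hself := hf.hessM_mulVec_self hθ hx
  have hvec : Matrix.vecMul x (hessM n f x) = 0 := by
    rw [← Matrix.mulVec_transpose, hessM_isSymm hf.isOpen hf.smooth (hf.subset hx), hself]
  simp [hessQ_eq_dotProduct, Matrix.mulVec_sub, Matrix.mulVec_smul, hself,
    Matrix.dotProduct_mulVec, Matrix.sub_vecMul, Matrix.smul_vecMul, hvec]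

lemma hessQ_pos (hf : IsCapHom n θ U f) (hθ : |cos θ| < 1) (hτ : TauPos n θ f)
    (hx : x ∈ coneCap n θ) {v : V n} (hv : v ∉ Submodule.span ℝ {x}) : 0 < hessQ n f x v v := by
  obtain ⟨l, hl, u, hu, rfl⟩ := hx
  have huC := sphCap_subset_coneCap hu
  refine pos_of_mul_pos_right ?_ hl.le
  rw [hf.hessQ_smul hθ huC hl, ← hf.hessQ_sub_smul_self hθ huC v ⟪v, u⟫]
  refine hτ.2 u hu _ (fun h => hv ?_) ?_
  · rw [sub_eq_zero.1 h, Submodule.mem_span_singleton]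
    exact ⟨⟪v, u⟫ * l⁻¹, by rw [smul_smul, inv_mul_cancel_right₀ hl.ne']⟩
  · rw [inner_sub_left, inner_smul_left, real_inner_self_eq_norm_sq, hu.1]
    simp

lemma fderiv_apply_le (hf : IsCapHom n θ U f) (hθ : |cos θ| < 1) (hθ' : 0 ≤ cos θ)
    (hτ : TauNonneg n θ f) (hx : x ∈ openCone n θ) (hy : y ∈ openCone n θ) :
    fderiv ℝ f x y ≤ f y := by
  have hseg : segment ℝ x y ⊆ coneCap n θ :=
    ((convex_openCone hθ').segment_subset hx hy).trans openCone_subset_coneCap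
  have h := fderiv_apply_sub_le (fun z hz => hf.differentiableAt (hseg hz))
    (fun z hz => hf.differentiableAt_fderiv (hseg hz))
    (fun z hz => hf.hessQ_nonneg hθ hτ (hseg hz) (y - x))
  rw [map_sub, hf.fderiv_self (openCone_subset_coneCap hx)] at h
  linarith

lemma exists_fderiv_Etop_pos (hn : 1 ≤ n) (hf : IsCapHom n θ U f) (hθ : |cos θ| < 1)
    (hτ : TauPos n θ f) : ∃ x ∈ openCone n θ, 0 < fderiv ℝ f x (Etop n) := by
  obtain ⟨y, hy, hy0⟩ := exists_mem_coneBdry_apply_zero_ne_zero hn hθ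
  have hyC := coneBdry_subset_coneCap hy
  have hEtop0 : Etop n 0 = 0 := by simp [Etop, (Fin.last_eq_zero_iff (n := n)).not.2 (by omega)]
  have hseg : ∀ z ∈ segment ℝ y (y + Etop n), z ∈ coneCap n θ ∧ Etop n ∉ Submodule.span ℝ {z} := by
    rw [segment_eq_image']
    rintro - ⟨t, ht, rfl⟩
    rw [add_sub_cancel_left]
    refine ⟨?_, fun hmem => ?_⟩
    · rcases ht.1.eq_or_lt with rfl | ht
      · simpa using hyC
      · exact openCone_subset_coneCap (add_smul_Etop_mem_openCone hθ hyC ht)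
    · obtain ⟨c, hc⟩ := Submodule.mem_span_singleton.1 hmem
      have hc0 : c = 0 := by simpa [hEtop0, hy0] using congrArg (fun w : V n => w 0) hc
      simpa [hc0, Etop_last] using congrArg (fun w : V n => w (Fin.last n)) hc
  refine ⟨y + Etop n, by simpa using add_smul_Etop_mem_openCone hθ hyC one_pos, ?_⟩
  rw [← hf.fderiv_Etop hθ hy]
  exact fderiv_apply_lt_of_pos (fun z hz => hf.differentiableAt_fderiv (hseg z hz).1)
    fun z hz => hf.hessQ_pos hθ hτ (hseg z hz).1 (hseg z hz).2

/- A supporting linear function of `f` at a point of positive vertical derivative `a` lies below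
`f`; removing its vertical part `a x_{n+1} > 0` makes the inequality strict. -/
lemma exists_clm_lt (hn : 1 ≤ n) (hf : IsCapHom n θ U f) (hθ : |cos θ| < 1) (hθ' : 0 ≤ cos θ)
    (hτ : TauPos n θ f) :
    ∃ L : StrongDual ℝ (V n), L (Etop n) = 0 ∧ ∀ x ∈ openCone n θ, L x < f x := by
  obtain ⟨q, hq, hpos⟩ := hf.exists_fderiv_Etop_pos hn hθ hτ
  refine ⟨fderiv ℝ f q - fderiv ℝ f q (Etop n) • EuclideanSpace.proj (Fin.last n),
    by simp [Etop_last], fun x hx => ?_⟩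
  have hvert := mul_pos hpos (last_pos_of_mem_openCone hθ' hx)
  simpa using (sub_lt_self _ hvert).trans_le (hf.fderiv_apply_le hθ hθ' hτ.1 hq hx)

end IsCapHom

end Convexity

section CapillarySupport
open scoped ContDiff
variable {n : ℕ} {θ : ℝ} {U : Set (V n)} {x : V n}

/-- The support function `‖x‖ - cos θ x_{n+1}` of the unit sphere centered at `-cos θ E_{n+1}`,
which is a positive capillary function. -/
def capSupp (n : ℕ) (θ : ℝ) (x : V n) : ℝ :=
  ‖x‖ - (cos θ • EuclideanSpace.proj (Fin.last n) : StrongDual ℝ (V n)) x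

lemma contDiffOn_norm_ne_zero : ContDiffOn ℝ ∞ (fun y : V n => ‖y‖) {x | x ≠ 0} :=
  fun _ hx => (contDiffAt_norm ℝ hx).contDiffWithinAt

lemma pd_norm (hx : x ≠ 0) (i : Fin (n + 1)) : pd i (fun y : V n => ‖y‖) x = ‖x‖⁻¹ * x i := by
  rw [pd, (hasStrictFDerivAt_norm hx).hasFDerivAt.fderiv]
  simp [EuclideanSpace.inner_single_right]

lemma hessM_norm (hx : x ≠ 0) :
    hessM n (fun y => ‖y‖) x = ‖x‖⁻¹ • 1 - ‖x‖⁻¹ ^ 3 • Matrix.vecMulVec x x := by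
  have hinv : HasFDerivAt (fun y : V n => ‖y‖⁻¹) _ x :=
    (hasDerivAt_inv (norm_ne_zero_iff.2 hx)).comp_hasFDerivAt x
      (hasStrictFDerivAt_norm hx).hasFDerivAt
  ext i j
  have hcoord := (EuclideanSpace.proj (𝕜 := ℝ) (ι := Fin (n + 1)) j).hasFDerivAt (x := x)
  have hpd : pd j (fun y : V n => ‖y‖) =ᶠ[nhds x] fun y => ‖y‖⁻¹ * EuclideanSpace.proj j y := by
    filter_upwards [isOpen_ne.mem_nhds hx] with y hy using pd_norm hy j
  rw [hessM_eq_pd isOpen_ne contDiffOn_norm_ne_zero hx, pd_congr i hpd,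
    pd_mul i hinv.differentiableAt hcoord.differentiableAt, pd, hcoord.fderiv, pd, hinv.fderiv]
  simp only [PiLp.proj_apply, PiLp.single_apply, eq_comm, mul_ite, mul_one, mul_zero, neg_smul,
    neg_apply, smul_apply, coe_innerSL_apply, EuclideanSpace.inner_single_right, ringHom_apply,
    one_mul, smul_eq_mul, mul_neg, inv_pow, Matrix.sub_apply, Matrix.smul_apply, Matrix.one_apply,
    Matrix.vecMulVec_apply]
  ring

lemma hessM_capSupp (hx : x ≠ 0) :
    hessM n (capSupp n θ) x = ‖x‖⁻¹ • 1 - ‖x‖⁻¹ ^ 3 • Matrix.vecMulVec x x := by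
  unfold capSupp
  rw [hessM_sub isOpen_ne contDiffOn_norm_ne_zero
    (ContinuousLinearMap.contDiff _).contDiffOn hx, hessM_clm, hessM_norm hx, sub_zero]

lemma isCapHom_capSupp (hU : IsOpen U) (hsub : coneCap n θ ⊆ U) (hU0 : U ⊆ {x | x ≠ 0}) :
    IsCapHom n θ U (capSupp n θ) where
  isOpen := hU
  subset := hsub
  smooth := (contDiffOn_norm_ne_zero.mono hU0).sub (ContinuousLinearMap.contDiff _).contDiffOn
  hom l hl x _ := by
    rw [capSupp, capSupp, norm_smul, Real.norm_of_nonneg hl.le, map_smul, smul_eq_mul, mul_sub]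
  capillary u hu := by
    have hu0 : u ≠ 0 := norm_ne_zero_iff.1 (hu.1 ▸ one_ne_zero)
    unfold capSupp
    rw [((hasStrictFDerivAt_norm hu0).hasFDerivAt.fun_sub
      (ContinuousLinearMap.hasFDerivAt _)).fderiv]
    simp [hu.1, hu.2, inner_Etop_right, Etop_last]

lemma capSupp_pos (hθ : |cos θ| < 1) (hx : x ≠ 0) : 0 < capSupp n θ x := by
  refine sub_pos.2 ((le_abs_self _).trans_lt ?_)
  calc |cos θ * x (Fin.last n)| = |cos θ| * ‖x (Fin.last n)‖ := abs_mul _ _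
    _ ≤ |cos θ| * ‖x‖ := by gcongr; exact PiLp.norm_apply_le x _
    _ < ‖x‖ := mul_lt_of_lt_one_left (norm_pos_iff.2 hx) hθ

end CapillarySupport

section HessianUniqueness
open scoped ContDiff
variable {n : ℕ} {θ : ℝ} {U : Set (V n)} {f g : V n → ℝ} {x : V n}

lemma sum_pd_newtonField_add_newtonField (hU : IsOpen U) (hf : ContDiffOn ℝ ∞ f U)
    (hg : ContDiffOn ℝ ∞ g U) (k : ℕ) (hx : x ∈ U) :
    ∑ i, pd i (fun y => newtonField k g g f i y + newtonField k f f g i y) x =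
      g x * ((newtonT (hessM n g x) k * hessM n f x).trace -
        (k + 1) * matSym (hessM n f x) (k + 1)) +
      f x * ((newtonT (hessM n f x) k * hessM n g x).trace -
        (k + 1) * matSym (hessM n g x) (k + 1)) := by
  have hpd (i : Fin (n + 1)) := pd_add i
    (differentiableAt_of_contDiffOn hU (contDiffOn_newtonField hU hg hg hf k i) hx)
    (differentiableAt_of_contDiffOn hU (contDiffOn_newtonField hU hf hf hg k i) hx)
  simp only [hpd, Finset.sum_add_distrib, sum_pd_newtonField hU hg hg hf k hx,
    sum_pd_newtonField hU hf hf hg k hx, trace_newtonT_mul_self]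
  ring

lemma newtonT_one {ι : Type*} [Fintype ι] [DecidableEq ι] (A : Matrix ι ι ℝ) :
    newtonT A 1 = A.trace • 1 - A := by
  rw [newtonT_succ, newtonT_zero, matSym_one, mul_one]

namespace IsCapHom

lemma hessM_eq_of_norm_sq_eq_two (hf : IsCapHom n θ U f) (hg : IsCapHom n θ U g)
    (hθ : |cos θ| < 1) (h : ∀ x ∈ openCone n θ, ‖x‖ ^ 2 = 2 → hessM n f x = hessM n g x)
    (hx : x ∈ openCone n θ) : hessM n f x = hessM n g x := by
  have hxC := openCone_subset_coneCap hx
  have hp := norm_pos_iff.2 (ne_zero_of_mem_coneCap hxC)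
  have hl : 0 < √2 * ‖x‖⁻¹ := by positivity
  rw [← hf.hessM_smul hθ hxC hl, ← hg.hessM_smul hθ hxC hl, h _ (smul_mem_openCone hl hx)]
  rw [norm_smul, Real.norm_of_nonneg hl.le, inv_mul_cancel_right₀ hp.ne', sq_sqrt zero_le_two]

lemma hessM_eq_of_matSym_eq_of_pos (hf : IsCapHom n θ U f) (hg : IsCapHom n θ U g)
    (hθ : |cos θ| < 1) (hf_psd : ∀ x ∈ openCone n θ, (hessM n f x).PosSemidef)
    (hg_psd : ∀ x ∈ openCone n θ, (hessM n g x).PosSemidef) {k : ℕ} (hk : 1 ≤ k)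
    (hσ_pos : ∀ x ∈ openCone n θ, 0 < matSym (hessM n g x) (k + 1))
    (hσ : ∀ x ∈ openCone n θ, matSym (hessM n f x) (k + 1) = matSym (hessM n g x) (k + 1))
    (hf_pos : ∀ x ∈ openCone n θ, 0 < f x) (hg_pos : ∀ x ∈ openCone n θ, 0 < g x)
    (hx : x ∈ openCone n θ) : hessM n f x = hessM n g x := by
  refine hf.hessM_eq_of_norm_sq_eq_two hg hθ (fun x hx hx2 => ?_) hx
  have hdiv (y : V n) (hy : y ∈ openCone n θ) := sum_pd_newtonField_add_newtonField
    hf.isOpen hf.smooth hg.smooth k (hf.subset (openCone_subset_coneCap hy))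
  have hle_f (y : V n) (hy : y ∈ openCone n θ) := sub_nonneg.2
    (le_trace_newtonT_mul (hf_psd y hy) (hg_psd y hy) hk (hσ y hy) (hσ_pos y hy))
  have hle_g (y : V n) (hy : y ∈ openCone n θ) := sub_nonneg.2
    (le_trace_newtonT_mul (hg_psd y hy) (hf_psd y hy) hk (hσ y hy).symm (hσ y hy ▸ hσ_pos y hy))
  have hzero := ((hg.isTangentField_newtonField hg hf hθ k).add
    (hf.isTangentField_newtonField hf hg hθ k)).sum_pd_eq_zero_of_nonneg hθ (fun y hy => by
      rw [hdiv y hy, hσ y hy]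
      exact add_nonneg (mul_nonneg (hg_pos y hy).le (hle_f y hy))
        (mul_nonneg (hf_pos y hy).le (hσ y hy ▸ hle_g y hy)))
    hx (by rw [hx2]; norm_num) (by rw [hx2]; norm_num)
  by_contra hne
  have hlt := sub_pos.2
    (lt_trace_newtonT_mul (hf_psd x hx) (hg_psd x hx) hk (hσ x hx) (hσ_pos x hx) hne)
  rw [hdiv x hx, hσ x hx] at hzero
  exact hzero.not_gt (add_pos_of_pos_of_nonneg (mul_pos (hg_pos x hx) hlt)
    (mul_nonneg (hf_pos x hx).le (hσ x hx ▸ hle_g x hx)))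

lemma sum_pd_newtonField_one_capSupp (hf : IsCapHom n θ U f) (hθ : |cos θ| < 1)
    (hU0 : U ⊆ {x | x ≠ 0}) (hx : x ∈ coneCap n θ) (htr : (hessM n f x).trace = 0) :
    ∑ i, pd i (newtonField 1 f f (capSupp n θ) i) x =
      capSupp n θ x * ((hessM n f x).conjTranspose * hessM n f x).trace := by
  have hxU := hf.subset hx
  have hT : newtonT (hessM n f x) 1 = -hessM n f x := by
    rw [newtonT_one, htr, zero_smul, zero_sub]
  have hcap : (hessM n f x * hessM n (capSupp n θ) x).trace = 0 := by
    rw [hessM_capSupp (hU0 hxU), mul_sub, Matrix.mul_smul, Matrix.mul_smul,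
      Matrix.mul_vecMulVec, hf.hessM_mulVec_self hθ hx]
    simp [htr]
  rw [sum_pd_newtonField hf.isOpen hf.smooth hf.smooth
    (isCapHom_capSupp hf.isOpen hf.subset hU0).smooth 1 hxU, hT, neg_mul, neg_mul,
    Matrix.trace_neg, Matrix.trace_neg, hcap, Matrix.conjTranspose_eq_transpose_of_trivial,
    hessM_isSymm hf.isOpen hf.smooth hxU]
  ring

lemma hessM_eq_zero_of_trace_eq_zero (hf : IsCapHom n θ U f) (hθ : |cos θ| < 1)
    (htr : ∀ x ∈ openCone n θ, (hessM n f x).trace = 0) (hx : x ∈ openCone n θ) :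
    hessM n f x = 0 := by
  have hU' : IsOpen (U ∩ {x | x ≠ 0}) := hf.isOpen.inter isOpen_ne
  have hsub' : coneCap n θ ⊆ U ∩ {x | x ≠ 0} :=
    fun x hx => ⟨hf.subset hx, ne_zero_of_mem_coneCap hx⟩
  replace hf := hf.mono hU' hsub' inter_subset_left
  have hcap := isCapHom_capSupp hU' hsub' inter_subset_right
  have hdiv (y : V n) (hy : y ∈ openCone n θ) := hf.sum_pd_newtonField_one_capSupp hθ
    inter_subset_right (openCone_subset_coneCap hy) (htr y hy)
  have hcap_pos (y : V n) (hy : y ∈ openCone n θ) :=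
    capSupp_pos hθ (ne_zero_of_mem_coneCap (openCone_subset_coneCap hy))
  rw [← hessM_clm 0 x]
  refine hf.hessM_eq_of_norm_sq_eq_two (isCapHom_clm hU' hsub' rfl) hθ (fun x hx hx2 => ?_) hx
  have hzero := (hf.isTangentField_newtonField hf hcap hθ 1).sum_pd_eq_zero_of_nonneg hθ
    (fun y hy => by
      rw [hdiv y hy]
      exact mul_nonneg (hcap_pos y hy).le
        (Matrix.posSemidef_conjTranspose_mul_self _).trace_nonneg)
    hx (by rw [hx2]; norm_num) (by rw [hx2]; norm_num)
  rw [hdiv x hx] at hzero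
  rw [hessM_clm]
  exact Matrix.trace_conjTranspose_mul_self_eq_zero_iff.1
    ((mul_eq_zero.1 hzero).resolve_left (hcap_pos x hx).ne')

lemma hessM_sub_clm (hf : IsCapHom n θ U f) (L : StrongDual ℝ (V n)) (hx : x ∈ coneCap n θ) :
    hessM n (fun y => f y - L y) x = hessM n f x := by
  rw [hessM_sub hf.isOpen hf.smooth L.contDiff.contDiffOn (hf.subset hx), hessM_clm, sub_zero]

lemma hessM_eq_of_matSym_eq (hn : 1 ≤ n) (hf : IsCapHom n θ U f) (hg : IsCapHom n θ U g)
    (hθ : |cos θ| < 1) (hθ' : 0 ≤ cos θ) (hf_tau : TauPos n θ f) (hg_tau : TauPos n θ g) {k : ℕ}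
    (hk : 1 ≤ k) (hσ_pos : ∀ x ∈ openCone n θ, 0 < matSym (hessM n g x) k)
    (hσ : ∀ x ∈ openCone n θ, matSym (hessM n f x) k = matSym (hessM n g x) k)
    (hx : x ∈ openCone n θ) : hessM n f x = hessM n g x := by
  have hC := openCone_subset_coneCap (n := n) (θ := θ)
  obtain rfl | ⟨k, hk', rfl⟩ : k = 1 ∨ ∃ k', 1 ≤ k' ∧ k = k' + 1 := by
    rcases hk.eq_or_lt with rfl | hk
    · exact .inl rfl
    · exact .inr ⟨k - 1, by omega, by omega⟩
  · have hsub (y : V n) (hy : y ∈ openCone n θ) :=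
      hessM_sub hf.isOpen hf.smooth hg.smooth (hf.subset (hC hy))
    rw [← sub_eq_zero, ← hsub x hx]
    refine (hf.sub hg).hessM_eq_zero_of_trace_eq_zero hθ (fun y hy => ?_) hx
    rw [hsub y hy, Matrix.trace_sub, ← matSym_one, ← matSym_one, hσ y hy, sub_self]
  · obtain ⟨L, hL, hLf⟩ := hf.exists_clm_lt hn hθ hθ' hf_tau
    obtain ⟨M, hM, hMg⟩ := hg.exists_clm_lt hn hθ hθ' hg_tau
    have hfL (y : V n) (hy : y ∈ openCone n θ) := hf.hessM_sub_clm L (hC hy)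
    have hgM (y : V n) (hy : y ∈ openCone n θ) := hg.hessM_sub_clm M (hC hy)
    rw [← hfL x hx, ← hgM x hx]
    exact (hf.sub (isCapHom_clm hf.isOpen hf.subset hL)).hessM_eq_of_matSym_eq_of_pos
      (hg.sub (isCapHom_clm hg.isOpen hg.subset hM)) hθ
      (fun y hy => hfL y hy ▸ hf.posSemidef_hessM hθ hf_tau.1 (hC hy))
      (fun y hy => hgM y hy ▸ hg.posSemidef_hessM hθ hg_tau.1 (hC hy)) hk'
      (fun y hy => hgM y hy ▸ hσ_pos y hy) (fun y hy => by rw [hfL y hy, hgM y hy, hσ y hy])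
      (fun y hy => sub_pos.2 (hLf y hy)) (fun y hy => sub_pos.2 (hMg y hy)) hx

lemma exists_clm_of_hessM_eq_zero (hn : 1 ≤ n) (hf : IsCapHom n θ U f) (hθ : |cos θ| < 1)
    (hθ' : 0 ≤ cos θ) (h : ∀ x ∈ openCone n θ, hessM n f x = 0) :
    ∃ L : StrongDual ℝ (V n), L (Etop n) = 0 ∧ ∀ x ∈ coneCap n θ, f x = L x := by
  obtain ⟨y, hy, -⟩ := exists_mem_coneBdry_apply_zero_ne_zero hn hθ
  have hyC := coneBdry_subset_coneCap hy
  have hq : y + (1 : ℝ) • Etop n ∈ openCone n θ := add_smul_Etop_mem_openCone hθ hyC one_pos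
  set q := y + (1 : ℝ) • Etop n
  have hzero (x : V n) (hx : x ∈ openCone n θ) : fderiv ℝ (fderiv ℝ f) x = 0 := by
    ext v w
    simpa [h x hx, hessQ] using hessQ_eq_dotProduct f x v w
  have hconst (x : V n) (hx : x ∈ coneCap n θ) : fderiv ℝ f x = fderiv ℝ f q :=
    eq_of_eqOn_openCone hθ hx (hf.contDiffAt_fderiv hx).continuousAt continuousAt_const
      fun z hz => isOpen_openCone.is_const_of_fderiv_eq_zero (convex_openCone hθ').isPreconnected
        (fun w hw =>
          (hf.differentiableAt_fderiv (openCone_subset_coneCap hw)).differentiableWithinAt)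
        hzero hz hq
  refine ⟨fderiv ℝ f q, ?_, fun x hx => ?_⟩
  · rw [← hconst y hyC, hf.fderiv_Etop hθ hy]
  · rw [← hconst x hx, hf.fderiv_self hx]

end IsCapHom

end HessianUniqueness

section CapGraph
variable {n : ℕ} {θ : ℝ} {v : Fin n → ℝ}

/-- The embedding of `ℝⁿ` in `ℝⁿ⁺¹` as the hyperplane `x_{n+1} = 0`. -/
def horizEmb (n : ℕ) : (Fin n → ℝ) →L[ℝ] V n :=
  ∑ i : Fin n, (ContinuousLinearMap.proj i).smulRight (EuclideanSpace.single i.castSucc 1)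

/-- The projection of `ℝⁿ⁺¹` to its first `n` coordinates. -/
def horizProj (n : ℕ) : V n →L[ℝ] Fin n → ℝ :=
  ContinuousLinearMap.pi fun i => EuclideanSpace.proj i.castSucc

/-- The parametrization of the capillary cap as a graph over the horizontal ball of radius
`|sin θ|`. -/
def capGraph (n : ℕ) (θ : ℝ) (v : Fin n → ℝ) : V n :=
  horizEmb n v + (√(1 - ‖horizEmb n v‖ ^ 2) - cos θ) • Etop n

lemma Etop_castSucc (i : Fin n) : Etop n i.castSucc = 0 := by simp [Etop, i.castSucc_ne_last]

lemma horizEmb_castSucc (v : Fin n → ℝ) (i : Fin n) : horizEmb n v i.castSucc = v i := by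
  simp [horizEmb, Pi.single_apply]

lemma horizEmb_last (v : Fin n → ℝ) : horizEmb n v (Fin.last n) = 0 := by
  simp [horizEmb, (Fin.castSucc_ne_last _).symm]

lemma horizEmb_horizProj_add (x : V n) :
    horizEmb n (horizProj n x) + x (Fin.last n) • Etop n = x := by
  ext i
  induction i using Fin.lastCases with
  | last => simp [horizEmb_last, Etop_last]
  | cast i => simp [horizEmb_castSucc, Etop_castSucc, horizProj]

lemma horizProj_capGraph (v : Fin n → ℝ) : horizProj n (capGraph n θ v) = v := by
  ext i
  simp [horizProj, capGraph, horizEmb_castSucc, Etop_castSucc]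

lemma norm_sq_horizEmb_add (v : Fin n → ℝ) (t : ℝ) :
    ‖horizEmb n v + t • Etop n‖ ^ 2 = ‖horizEmb n v‖ ^ 2 + t ^ 2 := by
  rw [norm_add_sq_real, inner_smul_right, inner_Etop_right, horizEmb_last, norm_smul, norm_Etop]
  simp

lemma norm_le_norm_horizEmb (v : Fin n → ℝ) : ‖v‖ ≤ ‖horizEmb n v‖ := by
  refine (pi_norm_le_iff_of_nonneg (norm_nonneg _)).2 fun i => ?_
  rw [← horizEmb_castSucc v i]
  exact PiLp.norm_apply_le _ _

lemma capGraph_mem (hv : ‖horizEmb n v‖ ≤ |sin θ|) : capGraph n θ v ∈ capCap n θ := by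
  have hsq : cos θ ^ 2 ≤ 1 - ‖horizEmb n v‖ ^ 2 := by
    have := sq_le_sq.2 ((abs_norm _).trans_le hv)
    linarith [sin_sq_add_cos_sq θ]
  constructor
  · simpa [capGraph, horizEmb_last, Etop_last] using Real.le_sqrt_of_sq_le hsq
  · rw [capGraph, add_assoc, ← add_smul, sub_add_cancel,
      ← sq_eq_sq₀ (norm_nonneg _) zero_le_one, norm_sq_horizEmb_add,
      Real.sq_sqrt ((sq_nonneg _).trans hsq)]
    ring

lemma exists_capGraph_eq (hθ : 0 ≤ cos θ) {ζ : V n} (hζ : ζ ∈ capCap n θ) :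
    ∃ v, ‖horizEmb n v‖ ≤ |sin θ| ∧ capGraph n θ v = ζ := by
  have hnorm : ‖horizEmb n (horizProj n ζ)‖ ^ 2 + (ζ (Fin.last n) + cos θ) ^ 2 = 1 := by
    rw [← norm_sq_horizEmb_add, add_smul, ← add_assoc, horizEmb_horizProj_add, hζ.2, one_pow]
  refine ⟨horizProj n ζ, ?_, ?_⟩
  · rw [← abs_norm, ← sq_le_sq]
    nlinarith [hζ.1, sin_sq_add_cos_sq θ]
  · rw [capGraph, ← hnorm, add_sub_cancel_left, Real.sqrt_sq (add_nonneg hζ.1 hθ),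
      add_sub_cancel_right, horizEmb_horizProj_add]

lemma contDiffAt_capGraph (hv : ‖horizEmb n v‖ < 1) : ContDiffAt ℝ 1 (capGraph n θ) v := by
  have hsqrt : ContDiffAt ℝ 1 (fun w : Fin n → ℝ => √(1 - ‖horizEmb n w‖ ^ 2)) v :=
    (contDiffAt_const.sub ((horizEmb n).contDiff.norm_sq ℝ).contDiffAt).sqrt (by
      nlinarith [norm_nonneg (horizEmb n v)])
  exact (horizEmb n).contDiff.contDiffAt.add ((hsqrt.sub contDiffAt_const).smul contDiffAt_const)

lemma isCompact_norm_horizEmb_le (r : ℝ) : IsCompact {v : Fin n → ℝ | ‖horizEmb n v‖ ≤ r} := by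
  refine (isCompact_closedBall (0 : Fin n → ℝ) r).of_isClosed_subset
    (isClosed_le (horizEmb n).continuous.norm continuous_const) fun v hv => ?_
  rw [mem_closedBall_zero_iff]
  exact (norm_le_norm_horizEmb v).trans hv

end CapGraph

section CapMeasure
variable {n : ℕ} {θ : ℝ}

lemma hausdorffMeasure_fin_pi_real : (μH[(n : ℝ)] : Measure (Fin n → ℝ)) = volume := by
  simpa using hausdorffMeasure_pi_real (ι := Fin n)

lemma hausdorffMeasure_capCap_lt_top (hθ : 0 < cos θ) :
    (μH[(n : ℝ)] : Measure (V n)) (capCap n θ) < ⊤ := by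
  have hcompact := isCompact_norm_horizEmb_le (n := n) |sin θ|
  have hsin : |sin θ| < 1 := by
    rw [← sq_lt_one_iff_abs_lt_one]
    nlinarith [sin_sq_add_cos_sq θ]
  have hlip : LocallyLipschitzOn {v | ‖horizEmb n v‖ ≤ |sin θ|} (capGraph n θ) := fun v hv => by
    obtain ⟨K, t, ht, hK⟩ :=
      (contDiffAt_capGraph (θ := θ) (hv.trans_lt hsin)).exists_lipschitzOnWith
    exact ⟨K, t, mem_nhdsWithin_of_mem_nhds ht, hK⟩
  obtain ⟨K, hK⟩ := hlip.exists_lipschitzOnWith_of_compact hcompact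
  calc (μH[(n : ℝ)] : Measure (V n)) (capCap n θ)
      ≤ μH[(n : ℝ)] (capGraph n θ '' {v | ‖horizEmb n v‖ ≤ |sin θ|}) :=
        measure_mono fun ζ hζ => exists_capGraph_eq hθ.le hζ
    _ ≤ K ^ (n : ℝ) * μH[(n : ℝ)] {v | ‖horizEmb n v‖ ≤ |sin θ|} :=
        hK.hausdorffMeasure_image_le n.cast_nonneg
    _ < ⊤ := by
        rw [hausdorffMeasure_fin_pi_real]
        exact ENNReal.mul_lt_top (ENNReal.rpow_lt_top_of_nonneg n.cast_nonneg ENNReal.coe_ne_top)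
          hcompact.measure_lt_top

lemma isCompact_capCap : IsCompact (capCap n θ) := by
  have hlast : Continuous fun ζ : V n => ζ (Fin.last n) := by fun_prop
  have hnorm : Continuous fun ζ : V n => ‖ζ + cos θ • Etop n‖ := by fun_prop
  refine (isCompact_closedBall (-(cos θ • Etop n)) 1).of_isClosed_subset
    ((isClosed_le continuous_const hlast).inter (isClosed_eq hnorm continuous_const))
    fun ζ hζ => ?_
  rw [mem_closedBall_iff_norm, sub_neg_eq_add, hζ.2]

lemma integrableOn_capCap (hθ : 0 < cos θ) {F : V n → ℝ} (hF : ContinuousOn F (capCap n θ)) :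
    IntegrableOn F (capCap n θ) μH[(n : ℝ)] :=
  let ⟨_, hC⟩ := isCompact_capCap.exists_bound_of_continuousOn hF
  IntegrableOn.of_bound (hausdorffMeasure_capCap_lt_top hθ)
    (hF.aestronglyMeasurable isCompact_capCap.measurableSet) _
    (ae_restrict_of_forall_mem isCompact_capCap.measurableSet hC)

lemma lipschitzWith_horizProj : LipschitzWith 1 (horizProj n) := by
  refine LipschitzWith.of_dist_le_mul fun x y => ?_
  rw [NNReal.coe_one, one_mul, dist_eq_norm, dist_eq_norm]
  exact (pi_norm_le_iff_of_nonneg (norm_nonneg _)).2 fun i => PiLp.norm_apply_le (x - y) i.castSucc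

lemma volume_horizProj_image_le (A : Set (V n)) : volume (horizProj n '' A) ≤ μH[(n : ℝ)] A := by
  rw [← hausdorffMeasure_fin_pi_real]
  simpa using lipschitzWith_horizProj.hausdorffMeasure_image_le n.cast_nonneg A

/- The points of the horizontal ball where `L` does not vanish form an open set, the projection of
a null set of the cap. -/
lemma clm_eq_zero_of_ae_capCap (hθ : |cos θ| < 1) {L : StrongDual ℝ (V n)} (hL : L (Etop n) = 0)
    (h : ∀ᵐ ζ ∂(μH[(n : ℝ)] : Measure (V n)).restrict (capCap n θ), L ζ = 0) : L = 0 := by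
  have hsin : 0 < |sin θ| := by
    have := sq_lt_one_iff_abs_lt_one _ |>.2 hθ
    exact abs_pos.2 fun hsin => by nlinarith [sin_sq_add_cos_sq θ]
  have hball : IsOpen {v | ‖horizEmb n v‖ < |sin θ|} :=
    isOpen_lt (horizEmb n).continuous.norm continuous_const
  have hopen : IsOpen {v | ‖horizEmb n v‖ < |sin θ| ∧ L (horizEmb n v) ≠ 0} :=
    hball.inter (isOpen_ne_fun (L.continuous.comp (horizEmb n).continuous) continuous_const)
  have hnull : (μH[(n : ℝ)] : Measure (V n)) {ζ | ¬ (ζ ∈ capCap n θ → L ζ = 0)} = 0 :=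
    ae_iff.1 ((ae_restrict_iff' isCompact_capCap.measurableSet).1 h)
  have hsub : {v | ‖horizEmb n v‖ < |sin θ| ∧ L (horizEmb n v) ≠ 0} ⊆
      horizProj n '' {ζ | ¬ (ζ ∈ capCap n θ → L ζ = 0)} := fun v hv => by
    refine ⟨capGraph n θ v, fun hcap => hv.2 ?_, horizProj_capGraph v⟩
    simpa [capGraph, hL] using hcap (capGraph_mem hv.1.le)
  have hempty := hopen.eq_empty_of_measure_zero
    (measure_mono_null hsub (nonpos_iff_eq_zero.1 ((volume_horizProj_image_le _).trans hnull.le)))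
  have hlocal : ⇑(L.comp (horizEmb n)) =ᶠ[nhds 0] fun _ => 0 := by
    filter_upwards [hball.mem_nhds (by simpa using hsin)] with v hv
    by_contra hne
    exact hempty.subset ⟨hv, hne⟩
  have hcomp : L.comp (horizEmb n) = 0 := by
    rw [← (L.comp (horizEmb n)).fderiv (x := 0), hlocal.fderiv_eq, fderiv_const_apply]
  ext x
  have hx : L (horizEmb n (horizProj n x)) = 0 := DFunLike.congr_fun hcomp _
  rw [← horizEmb_horizProj_add x, map_add, map_smul, hL, hx]
  simp

lemma clm_eq_zero_of_integral_mul_coord_eq_zero (hθ : |cos θ| < 1) (hθ' : 0 < cos θ)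
    {L : StrongDual ℝ (V n)} (hL : L (Etop n) = 0)
    (h : ∀ i, i ≠ Fin.last n → ∫ ζ in capCap n θ, L ζ * ζ i ∂μH[(n : ℝ)] = 0) : L = 0 := by
  have hexpand (ζ : V n) : L ζ ^ 2 = ∑ i, L (EuclideanSpace.single i 1) * (L ζ * ζ i) := by
    have hsum : L ζ = ∑ i, ζ i * L (EuclideanSpace.single i 1) := by
      simpa [pd] using fderiv_apply_eq_sum_pd L 0 ζ
    rw [sq]
    nth_rewrite 2 [hsum]
    rw [Finset.mul_sum]
    exact Finset.sum_congr rfl fun i _ => by ring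
  have hint : ∫ ζ in capCap n θ, L ζ ^ 2 ∂μH[(n : ℝ)] = 0 := by
    simp only [hexpand]
    rw [integral_finsetSum _ fun i _ =>
      (integrableOn_capCap hθ' (by fun_prop : Continuous _).continuousOn).const_mul _]
    refine Finset.sum_eq_zero fun i _ => ?_
    rw [integral_const_mul, mul_eq_zero]
    rcases eq_or_ne i (Fin.last n) with rfl | hi
    · exact .inl hL
    · exact .inr (h i hi)
  refine clm_eq_zero_of_ae_capCap hθ hL ?_
  filter_upwards [(setIntegral_eq_zero_iff_of_nonneg_ae (ae_of_all _ fun ζ => sq_nonneg (L ζ))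
    (integrableOn_capCap hθ' (by fun_prop : Continuous _).continuousOn)).1 hint] with ζ hζ
    using pow_eq_zero_iff two_ne_zero |>.1 hζ

end CapMeasure

section Uniqueness
variable {n k : ℕ} {θ : ℝ} {φ s s₁ s₂ G G₁ G₂ : V n → ℝ}

lemma add_mem_sphCap {ζ : V n} (hζ : ζ ∈ capCap n θ) : ζ + cos θ • Etop n ∈ sphCap n θ :=
  ⟨hζ.2, by simpa [Etop_last] using hζ.1⟩

lemma sub_mem_capCap {u : V n} (hu : u ∈ sphCap n θ) : u - cos θ • Etop n ∈ capCap n θ :=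
  ⟨by simpa [Etop_last] using hu.2, by rw [sub_add_cancel]; exact hu.1⟩

lemma IsHomExt.continuousOn (h : IsHomExt n θ ⊤ s G) : ContinuousOn s (capCap n θ) := by
  obtain ⟨⟨U, -, hsub, hsmooth⟩, -, hext⟩ := h
  have hG : ContinuousOn (fun ζ => G (ζ + cos θ • Etop n)) (capCap n θ) :=
    hsmooth.continuousOn.comp (by fun_prop)
      fun ζ hζ => hsub (sphCap_subset_coneCap (add_mem_sphCap hζ))
  exact hG.congr fun ζ hζ => (hext ζ hζ).symm

/-- `s`, with 1-homogeneous extension `G`, is a strictly convex smooth capillary function with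
`σ_k(τ[s]) = φ` and vanishing horizontal moments. -/
structure IsCapSolution (n k : ℕ) (θ : ℝ) (φ s G : V n → ℝ) : Prop where
  homExt : IsHomExt n θ ⊤ s G
  capillary : IsCapillaryF n θ G
  tauPos : TauPos n θ G
  moment : ∀ i : Fin (n + 1), i ≠ Fin.last n → ∫ ζ in capCap n θ, s ζ * ζ i ∂μH[(n : ℝ)] = 0
  sigmaElem_eq : ∀ ζ ∈ capCap n θ, sigmaElem n k G (ζ + cos θ • Etop n) = φ ζ

namespace IsCapSolution

lemma exists_isCapHom (h : IsCapSolution n k θ φ s G) : ∃ U, IsCapHom n θ U G :=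
  h.homExt.exists_isCapHom h.capillary

lemma integrableOn_mul_coord (h : IsCapSolution n k θ φ s G) (hθ : 0 < cos θ) (i : Fin (n + 1)) :
    IntegrableOn (fun ζ => s ζ * ζ i) (capCap n θ) μH[(n : ℝ)] :=
  integrableOn_capCap hθ (h.homExt.continuousOn.mul (by fun_prop : Continuous _).continuousOn)

lemma matSym_hessM_smul (h : IsCapSolution n k θ φ s G) (hθ : |cos θ| < 1) (hkn : k ≤ n) {l : ℝ}
    (hl : 0 < l) {u : V n} (hu : u ∈ sphCap n θ) :
    matSym (hessM n G (l • u)) k = l⁻¹ ^ k * φ (u - cos θ • Etop n) := by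
  obtain ⟨U, hG⟩ := h.exists_isCapHom
  have hφ := h.sigmaElem_eq _ (sub_mem_capCap hu)
  rw [sub_add_cancel, sigmaElem] at hφ
  have hscale : hessM n G (l • u) = l⁻¹ • hessM n G u := by
    rw [← hG.hessM_smul hθ (sphCap_subset_coneCap hu) hl, inv_smul_smul₀ hl.ne']
  rw [hscale, matSym_smul, matSym_eq_charpoly_coeff _ (by simpa using hkn.trans n.le_succ),
    Fintype.card_fin, hφ]

lemma clm_eq_zero_of_sub_eq (h₁ : IsCapSolution n k θ φ s₁ G₁) (h₂ : IsCapSolution n k θ φ s₂ G₂)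
    (hθ : |cos θ| < 1) (hθ' : 0 < cos θ) {L : StrongDual ℝ (V n)} (hL : L (Etop n) = 0)
    (hGL : ∀ x ∈ coneCap n θ, G₁ x - G₂ x = L x) : L = 0 := by
  have hsub (ζ : V n) (hζ : ζ ∈ capCap n θ) : L ζ = s₁ ζ - s₂ ζ := by
    rw [← h₁.homExt.2.2 ζ hζ, ← h₂.homExt.2.2 ζ hζ,
      hGL _ (sphCap_subset_coneCap (add_mem_sphCap hζ)), map_add, map_smul, hL, smul_zero, add_zero]
  refine clm_eq_zero_of_integral_mul_coord_eq_zero hθ hθ' hL fun i hi => ?_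
  calc ∫ ζ in capCap n θ, L ζ * ζ i ∂μH[(n : ℝ)]
      = ∫ ζ in capCap n θ, (s₁ ζ * ζ i - s₂ ζ * ζ i) ∂μH[(n : ℝ)] :=
        setIntegral_congr_fun isCompact_capCap.measurableSet fun ζ hζ => by
          simp only [hsub ζ hζ, sub_mul]
    _ = 0 := by
        rw [integral_sub (h₁.integrableOn_mul_coord hθ' i) (h₂.integrableOn_mul_coord hθ' i),
          h₁.moment i hi, h₂.moment i hi, sub_zero]

theorem eqOn_coneCap (hθ : |cos θ| < 1) (hθ' : 0 < cos θ) (hk : 1 ≤ k) (hkn : k ≤ n)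
    (hφ : ∀ ζ ∈ capCap n θ, 0 < φ ζ) (h₁ : IsCapSolution n k θ φ s₁ G₁)
    (h₂ : IsCapSolution n k θ φ s₂ G₂) : EqOn G₁ G₂ (coneCap n θ) := by
  obtain ⟨U₁, hU₁⟩ := h₁.exists_isCapHom
  obtain ⟨U₂, hU₂⟩ := h₂.exists_isCapHom
  have hn := hk.trans hkn
  have hU := hU₁.isOpen.inter hU₂.isOpen
  have hsub : coneCap n θ ⊆ U₁ ∩ U₂ := subset_inter hU₁.subset hU₂.subset
  have hG₁ := hU₁.mono hU hsub inter_subset_left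
  have hG₂ := hU₂.mono hU hsub inter_subset_right
  have hσ_pos : ∀ x ∈ openCone n θ, 0 < matSym (hessM n G₂ x) k := fun x hx => by
    obtain ⟨l, hl, u, hu, rfl⟩ := openCone_subset_coneCap hx
    rw [h₂.matSym_hessM_smul hθ hkn hl hu]
    exact mul_pos (pow_pos (inv_pos.2 hl) k) (hφ _ (sub_mem_capCap hu))
  have hσ : ∀ x ∈ openCone n θ, matSym (hessM n G₁ x) k = matSym (hessM n G₂ x) k := fun x hx => by
    obtain ⟨l, hl, u, hu, rfl⟩ := openCone_subset_coneCap hx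
    rw [h₁.matSym_hessM_smul hθ hkn hl hu, h₂.matSym_hessM_smul hθ hkn hl hu]
  obtain ⟨L, hL, hGL⟩ := (hG₁.sub hG₂).exists_clm_of_hessM_eq_zero hn hθ hθ'.le fun x hx => by
    rw [hessM_sub hU hG₁.smooth hG₂.smooth (hsub (openCone_subset_coneCap hx)),
      hG₁.hessM_eq_of_matSym_eq hn hG₂ hθ hθ'.le h₁.tauPos h₂.tauPos hk hσ_pos hσ hx, sub_self]
  intro x hx
  rw [← sub_eq_zero, hGL x hx, h₁.clm_eq_zero_of_sub_eq h₂ hθ hθ' hL hGL, zero_apply]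

end IsCapSolution

end Uniqueness

section DerivativeBounds
variable {n : ℕ} {θ : ℝ} {U W : Set (V n)} {f g : V n → ℝ} {x : V n}

lemma isCompact_sphCap : IsCompact (sphCap n θ) := by
  have hlast : Continuous fun u : V n => u (Fin.last n) := by fun_prop
  exact (isCompact_sphere (0 : V n) 1).of_isClosed_subset
    ((isClosed_eq continuous_norm continuous_const).inter (isClosed_le continuous_const hlast))
    fun u hu => mem_sphere_zero_iff_norm.2 hu.1

namespace IsCapHom

lemma continuousAt_iteratedFDeriv (hf : IsCapHom n θ U f) (j : ℕ) (hx : x ∈ coneCap n θ) :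
    ContinuousAt (iteratedFDeriv ℝ j f) x :=
  (hf.contDiffAt hx).continuousAt_iteratedFDeriv (mod_cast le_top)

lemma iteratedFDeriv_eq (hθ : |cos θ| < 1) (hf : IsCapHom n θ U f) (hg : IsCapHom n θ W g)
    (h : EqOn f g (coneCap n θ)) (j : ℕ) (hx : x ∈ coneCap n θ) :
    iteratedFDeriv ℝ j f x = iteratedFDeriv ℝ j g x := by
  refine eq_of_eqOn_openCone hθ hx (hf.continuousAt_iteratedFDeriv j hx)
    (hg.continuousAt_iteratedFDeriv j hx) fun y hy => ?_
  have heq : f =ᶠ[nhds y] g := by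
    filter_upwards [isOpen_openCone.mem_nhds hy] with z hz using h (openCone_subset_coneCap hz)
  exact (heq.iteratedFDeriv ℝ j).eq_of_nhds

lemma exists_iteratedFDeriv_bound (hf : IsCapHom n θ U f) (m : ℕ) :
    ∃ C > 0, ∀ u ∈ sphCap n θ, ∀ j ≤ m, ‖iteratedFDeriv ℝ j f u‖ ≤ C := by
  choose C hC using fun j : ℕ => isCompact_sphCap.exists_bound_of_continuousOn fun u hu =>
    (hf.continuousAt_iteratedFDeriv j (sphCap_subset_coneCap hu)).continuousWithinAt
  refine ⟨1 + ∑ j ∈ Finset.range (m + 1), |C j|, by positivity, fun u hu j hj => ?_⟩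
  calc ‖iteratedFDeriv ℝ j f u‖ ≤ |C j| := (hC j u hu).trans (le_abs_self _)
    _ ≤ ∑ j ∈ Finset.range (m + 1), |C j| := Finset.single_le_sum (f := fun j => |C j|)
        (fun i _ => abs_nonneg _) (Finset.mem_range.2 (Nat.lt_succ_of_le hj))
    _ ≤ 1 + ∑ j ∈ Finset.range (m + 1), |C j| := le_add_of_nonneg_left zero_le_one

end IsCapHom

end DerivativeBounds

/-- `C^m` estimates for solutions of the capillary `σ_k` problem. -/
theorem capillary_Cm_estimate (n k : ℕ) (hn : 1 ≤ n) (θ : ℝ)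
    (hθ : θ ∈ Ioo 0 (π / 2)) (hk : 1 ≤ k) (hkn : k ≤ n)
    (φ Φ : V n → ℝ) (hφpos : ∀ ζ ∈ capCap n θ, 0 < φ ζ) (hΦ : IsHomExt n θ ⊤ φ Φ) :
    ∀ m : ℕ, 1 ≤ m → ∃ C : ℝ, 0 < C ∧
      ∀ s G : V n → ℝ, IsHomExt n θ ⊤ s G → IsCapillaryF n θ G → TauPos n θ G →
        (∀ i : Fin (n + 1), i ≠ Fin.last n →
          ∫ ζ in capCap n θ, s ζ * ζ i ∂μH[(n : ℝ)] = 0) →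
        (∀ ζ ∈ capCap n θ, sigmaElem n k G (ζ + Real.cos θ • Etop n) = φ ζ) →
        ∀ u ∈ sphCap n θ, ∀ j : ℕ, j ≤ m → ‖iteratedFDeriv ℝ j G u‖ ≤ C := by
  intro m _
  have hpos : 0 < cos θ := cos_pos_of_mem_Ioo ⟨by linarith [hθ.1, pi_pos], hθ.2⟩
  have hlt : |cos θ| < 1 := by
    rw [abs_of_pos hpos, ← cos_zero]
    exact cos_lt_cos_of_nonneg_of_le_pi_div_two le_rfl hθ.2.le hθ.1
  by_cases hex : ∃ s₀ G₀, IsCapSolution n k θ φ s₀ G₀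
  · obtain ⟨s₀, G₀, hsol₀⟩ := hex
    obtain ⟨U₀, hG₀⟩ := hsol₀.exists_isCapHom
    obtain ⟨C, hC, hbound⟩ := hG₀.exists_iteratedFDeriv_bound m
    refine ⟨C, hC, fun s G hext hcap hτ hmoment hσ u hu j hj => ?_⟩
    have hsol : IsCapSolution n k θ φ s G := ⟨hext, hcap, hτ, hmoment, hσ⟩
    obtain ⟨U, hG⟩ := hsol.exists_isCapHom
    rw [hG.iteratedFDeriv_eq hlt hG₀ (hsol.eqOn_coneCap hlt hpos hk hkn hφpos hsol₀) j
      (sphCap_subset_coneCap hu)]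
    exact hbound u hu j hj
  · exact ⟨1, one_pos, fun s G hext hcap hτ hmoment hσ =>
      (hex ⟨s, G, hext, hcap, hτ, hmoment, hσ⟩).elim⟩
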